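/- Let f(x) = F₁(x') + ωF₂(x') ∈ GSR(Ω_D) and for k ∈ ℕ set A_k(x') = ((1/r)∂_r)^k F₁(x') and B_k(x') = (∂_r ∘ (1/r)·)^k F₂(x') (values at r = 0 understood as limits as r → 0). Then for all k ∈ ℕ and all x ∈ Ω_D: Δ_x^k f(x) = C_q(k)(A_k(x') + ω B_k(x')) and D_x Δ_x^k f(x) = −C_q(k+1) B_k(x')/r, where C_q(0) = 1 and C_q(k) = (q−1)(q−3)⋯(q−2k+1) for k ≥ 1. -/

import Mathlib

open scoped BigOperators
open Filter Topology

namespace GPSM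

variable (A : Type*) [NormedAddCommGroup A] [NormedSpace ℝ A] [Mul A] [One A]

/-- `A` is a real alternative algebra with unit `1`, of finite dimension `d > 1`,
equipped with an anti-involution `conj` (a real-linear map with `(a^c)^c = a`,
`(ab)^c = b^c a^c`, fixing the reals).  The associator is alternating (left/right
alternative laws). -/
structure IsAltStarAlg (conj : A → A) : Prop where
  finDim : FiniteDimensional ℝ A
  one_lt_finrank : 1 < Module.finrank ℝ A
  mul_add' : ∀ a b c : A, a * (b + c) = a * b + a * c
  add_mul' : ∀ a b c : A, (a + b) * c = a * c + b * c
  smul_mul' : ∀ (r : ℝ) (a b : A), (r • a) * b = r • (a * b)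
  mul_smul' : ∀ (r : ℝ) (a b : A), a * (r • b) = r • (a * b)
  one_mul' : ∀ a : A, 1 * a = a
  mul_one' : ∀ a : A, a * 1 = a
  alt_left : ∀ a b : A, a * (a * b) = a * a * b
  alt_right : ∀ a b : A, a * b * b = a * (b * b)
  conj_add : ∀ a b : A, conj (a + b) = conj a + conj b
  conj_smul : ∀ (r : ℝ) (a : A), conj (r • a) = r • conj a
  conj_conj : ∀ a : A, conj (conj a) = a
  conj_mul : ∀ a b : A, conj (a * b) = conj b * conj a
  conj_one : conj 1 = 1

/-- `v 0, v 1, …, v m` is a hypercomplex basis of the hypercomplex subspace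
`M = span(v 0, …, v m)` of `A`: `v 0 = 1`, `t(v s) = 0`, `n(v s) = 1`, the `v s`
anticommute for distinct `s, t ∈ {1,…,m}`, they are linearly independent, and
`M` is contained in the quadratic cone `Q_A`. -/
structure IsHypBasis (conj : A → A) (v : ℕ → A) (m : ℕ) : Prop where
  v_zero : v 0 = 1
  trace_zero : ∀ s, 1 ≤ s → s ≤ m → v s + conj (v s) = 0
  norm_one : ∀ s, 1 ≤ s → s ≤ m → v s * conj (v s) = 1
  anticomm : ∀ s t, 1 ≤ s → s ≤ m → 1 ≤ t → t ≤ m → s ≠ t → v s * v t = -(v t * v s)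
  indep : LinearIndependent ℝ (fun i : Fin (m + 1) => v i)
  mem_cone : ∀ x ∈ Submodule.span ℝ (Set.range fun i : Fin (m + 1) => v (i : ℕ)),
      ∃ tr nr : ℝ, x + conj x = tr • (1 : A) ∧ x * conj x = nr • (1 : A) ∧
        ((∃ r : ℝ, x = r • (1 : A)) ∨ tr ^ 2 < 4 * nr)

variable {A}

/-- Identification of `ℝ^{m+1}` with the hypercomplex subspace `M`:
`(x_0,…,x_m) ↦ Σ x_s • v s`. -/
def emb (v : ℕ → A) (m : ℕ) (x : Fin (m + 1) → ℝ) : A :=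
  ∑ s : Fin (m + 1), x s • v (s : ℕ)

/-- First `p+1` coordinates of a point of `M ≅ ℝ^{m+1}`, i.e. the `x_p`-part. -/
def projP (m p : ℕ) (x : Fin (m + 1) → ℝ) : Fin (p + 1) → ℝ := fun s =>
  if h : (s : ℕ) < m + 1 then x ⟨(s : ℕ), h⟩ else 0

/-- Inclusion `ℝ^{p+1} ⊆ ℝ^{m+1}` (remaining coordinates `0`). -/
def injP (m p : ℕ) (y : Fin (p + 1) → ℝ) : Fin (m + 1) → ℝ := fun s =>
  if h : (s : ℕ) < p + 1 then y ⟨(s : ℕ), h⟩ else 0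

/-- The coordinates of `x_q` (last `q = m - p` coordinates of `x`). -/
def xqpart (m p : ℕ) (x : Fin (m + 1) → ℝ) : Fin (m + 1) → ℝ := fun s =>
  if (s : ℕ) ≤ p then 0 else x s

/-- The coordinates of `x_p` inside `ℝ^{m+1}`. -/
def xppart (m p : ℕ) (x : Fin (m + 1) → ℝ) : Fin (m + 1) → ℝ := fun s =>
  if (s : ℕ) ≤ p then x s else 0

/-- `r = |x_q|`. -/
noncomputable def rad (m p : ℕ) (x : Fin (m + 1) → ℝ) : ℝ :=
  Real.sqrt (∑ s : Fin (m + 1), (xqpart m p x s) ^ 2)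

/-- `ω = x_q / |x_q|` (coordinates), `0` when `x_q = 0`. -/
noncomputable def normq (m p : ℕ) (x : Fin (m + 1) → ℝ) : Fin (m + 1) → ℝ :=
  (rad m p x)⁻¹ • xqpart m p x

/-- The reflection `x = x_p + x_q ↦ x_⋄ = x_p - x_q`. -/
def reflP (m p : ℕ) (x : Fin (m + 1) → ℝ) : Fin (m + 1) → ℝ := fun s =>
  if (s : ℕ) ≤ p then x s else -x s

/-- The sphere `𝕊 = {x_q ∈ span(v_{p+1},…,v_m) : x_q² = -1}`, in coordinates. -/
def Sph (v : ℕ → A) (m p : ℕ) : Set (Fin (m + 1) → ℝ) :=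
  {w | (∀ s : Fin (m + 1), (s : ℕ) ≤ p → w s = 0) ∧ emb v m w * emb v m w = -1}

/-- The point `x_p + r ω` of `M ≅ ℝ^{m+1}`. -/
def pt (m p : ℕ) (w : Fin (m + 1) → ℝ) (y : Fin (p + 1) → ℝ) (r : ℝ) :
    Fin (m + 1) → ℝ :=
  injP m p y + r • w

/-- The slice `Ω_ω ⊆ ℝ^{p+2}` of `Ω` at `ω`. -/
def sliceSet (m p : ℕ) (Ω : Set (Fin (m + 1) → ℝ)) (w : Fin (m + 1) → ℝ) :
    Set ((Fin (p + 1) → ℝ) × ℝ) := {z | pt m p w z.1 z.2 ∈ Ω}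

/-- The restriction `f_ω` of `f` to the slice at `ω`, as a function on `ℝ^{p+2}`. -/
def sliceFun (m p : ℕ) (f : (Fin (m + 1) → ℝ) → A) (w : Fin (m + 1) → ℝ) :
    (Fin (p + 1) → ℝ) × ℝ → A := fun z => f (pt m p w z.1 z.2)

/-- Partial derivative `∂_{x_s}` of a function on `ℝ^{m+1}`. -/
noncomputable def pdF (m : ℕ) (s : Fin (m + 1)) (f : (Fin (m + 1) → ℝ) → A)
    (x : Fin (m + 1) → ℝ) : A := fderiv ℝ f x (Pi.single s 1)

/-- Partial derivative `∂_{x_s}` of a function on `ℝ^{p+1}`. -/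
noncomputable def pdP (p : ℕ) (s : Fin (p + 1)) (g : (Fin (p + 1) → ℝ) → A)
    (y : Fin (p + 1) → ℝ) : A := fderiv ℝ g y (Pi.single s 1)

/-- Partial derivative `∂_{x_s}` of a function on `ℝ^{p+2} = ℝ^{p+1} × ℝ`. -/
noncomputable def pdSx (p : ℕ) (s : Fin (p + 1)) (G : (Fin (p + 1) → ℝ) × ℝ → A)
    (z : (Fin (p + 1) → ℝ) × ℝ) : A := fderiv ℝ G z (Pi.single s 1, 0)

/-- Partial derivative `∂_r` of a function on `ℝ^{p+2} = ℝ^{p+1} × ℝ`. -/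
noncomputable def pdSr (p : ℕ) (G : (Fin (p + 1) → ℝ) × ℝ → A)
    (z : (Fin (p + 1) → ℝ) × ℝ) : A := fderiv ℝ G z (0, 1)

/-- Second partial derivative `∂_r²`. -/
noncomputable def pdSr2 (p : ℕ) (G : (Fin (p + 1) → ℝ) × ℝ → A)
    (z : (Fin (p + 1) → ℝ) × ℝ) : A := pdSr p (pdSr p G) z

/-- The operator `Σ_{lo ≤ s ≤ hi} v_s ∂_{x_s}` on functions on `ℝ^{m+1}`.
`Dop v m 0 p` is `D_{x_p}`, `Dop v m (p+1) m` is `D_{x_q}`, `Dop v m 0 m` is `D_x`. -/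
noncomputable def Dop (v : ℕ → A) (m lo hi : ℕ) (f : (Fin (m + 1) → ℝ) → A)
    (x : Fin (m + 1) → ℝ) : A :=
  ∑ s : Fin (m + 1), if lo ≤ (s : ℕ) ∧ (s : ℕ) ≤ hi then v (s : ℕ) * pdF m s f x else 0

/-- The conjugate operator `∂_{x_0} - Σ_{1 ≤ s ≤ hi} v_s ∂_{x_s}` on functions on
`ℝ^{m+1}`; `Dbarop v m p` is `D̄_{x_p}`, `Dbarop v m m` is `D̄_x`. -/
noncomputable def Dbarop (v : ℕ → A) (m hi : ℕ) (f : (Fin (m + 1) → ℝ) → A)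
    (x : Fin (m + 1) → ℝ) : A :=
  pdF m 0 f x -
    ∑ s : Fin (m + 1), if 1 ≤ (s : ℕ) ∧ (s : ℕ) ≤ hi then v (s : ℕ) * pdF m s f x else 0

/-- The operator `D_{x_p} = Σ_{s=0}^p v_s ∂_{x_s}` on functions on `ℝ^{p+1}`. -/
noncomputable def DopP (v : ℕ → A) (p : ℕ) (g : (Fin (p + 1) → ℝ) → A)
    (y : Fin (p + 1) → ℝ) : A :=
  ∑ s : Fin (p + 1), v (s : ℕ) * pdP p s g y

/-- The operator `D̄_{x_p} = ∂_{x_0} - Σ_{s=1}^p v_s ∂_{x_s}` on functions on `ℝ^{p+1}`. -/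
noncomputable def DbaropP (v : ℕ → A) (p : ℕ) (g : (Fin (p + 1) → ℝ) → A)
    (y : Fin (p + 1) → ℝ) : A :=
  pdP p 0 g y - ∑ s : Fin (p + 1), if 1 ≤ (s : ℕ) then v (s : ℕ) * pdP p s g y else 0

/-- The operator `D_{x_p}` on functions on `ℝ^{p+2} = ℝ^{p+1} × ℝ`. -/
noncomputable def DopSx (v : ℕ → A) (p : ℕ) (G : (Fin (p + 1) → ℝ) × ℝ → A)
    (z : (Fin (p + 1) → ℝ) × ℝ) : A :=
  ∑ s : Fin (p + 1), v (s : ℕ) * pdSx p s G z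

/-- The operator `D̄_{x_p}` on functions on `ℝ^{p+2} = ℝ^{p+1} × ℝ`. -/
noncomputable def DbaropSx (v : ℕ → A) (p : ℕ) (G : (Fin (p + 1) → ℝ) × ℝ → A)
    (z : (Fin (p + 1) → ℝ) × ℝ) : A :=
  pdSx p 0 G z - ∑ s : Fin (p + 1), if 1 ≤ (s : ℕ) then v (s : ℕ) * pdSx p s G z else 0

/-- The Laplacian `Δ_x` on functions on `ℝ^{m+1}`. -/
noncomputable def lapF (m : ℕ) (f : (Fin (m + 1) → ℝ) → A)
    (x : Fin (m + 1) → ℝ) : A :=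
  ∑ s : Fin (m + 1), pdF m s (pdF m s f) x

/-- The Laplacian `Δ_{x_p}` on functions on `ℝ^{p+1}`. -/
noncomputable def lapP (p : ℕ) (g : (Fin (p + 1) → ℝ) → A)
    (y : Fin (p + 1) → ℝ) : A :=
  ∑ s : Fin (p + 1), pdP p s (pdP p s g) y

/-- Iterated Laplacian `Δ_x^k`. -/
noncomputable def lapIterF (m k : ℕ) (f : (Fin (m + 1) → ℝ) → A) :
    (Fin (m + 1) → ℝ) → A :=
  (fun g => lapF m g)^[k] f

/-- Iterated Laplacian `Δ_{x_p}^k`. -/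
noncomputable def lapIterP (p k : ℕ) (g : (Fin (p + 1) → ℝ) → A) :
    (Fin (p + 1) → ℝ) → A :=
  (fun h => lapP p h)^[k] g

/-- The Laplacian `Δ_{x'} = Δ_{x_p} + ∂_r²` on functions on `ℝ^{p+2}`. -/
noncomputable def lapSx (p : ℕ) (G : (Fin (p + 1) → ℝ) × ℝ → A)
    (z : (Fin (p + 1) → ℝ) × ℝ) : A :=
  (∑ s : Fin (p + 1), pdSx p s (pdSx p s G) z) + pdSr2 p G z

/-- The slice Cauchy-Riemann operator `D_ω = D_{x_p} + ω ∂_r` applied to a function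
on `ℝ^{p+2}`, where `ω` is given in coordinates by `w`. -/
noncomputable def DomCR (v : ℕ → A) (m p : ℕ) (w : Fin (m + 1) → ℝ)
    (G : (Fin (p + 1) → ℝ) × ℝ → A) (z : (Fin (p + 1) → ℝ) × ℝ) : A :=
  DopSx v p G z + emb v m w * pdSr p G z

/-- `f` is left generalized partial-slice monogenic (of type `(p, m-p)`) on `Ω`. -/
def GSM (v : ℕ → A) (m p : ℕ) (f : (Fin (m + 1) → ℝ) → A)
    (Ω : Set (Fin (m + 1) → ℝ)) : Prop :=
  ∀ w ∈ Sph v m p, ContDiffOn ℝ 1 (sliceFun m p f w) (sliceSet m p Ω w) ∧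
    ∀ z ∈ sliceSet m p Ω w, DomCR v m p w (sliceFun m p f w) z = 0

/-- `Ω` is partially symmetric with respect to `ℝ^{p+1}`. -/
def PSym (v : ℕ → A) (m p : ℕ) (Ω : Set (Fin (m + 1) → ℝ)) : Prop :=
  ∀ x ∈ Ω, ∀ w ∈ Sph v m p, xppart m p x + rad m p x • w ∈ Ω

/-- `Ω` is a slice domain: a domain meeting `ℝ^{p+1}` all of whose slices are
domains in `ℝ^{p+2}`. -/
def SliceDomain (v : ℕ → A) (m p : ℕ) (Ω : Set (Fin (m + 1) → ℝ)) : Prop :=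
  IsOpen Ω ∧ IsConnected Ω ∧ (∃ x ∈ Ω, xqpart m p x = 0) ∧
    ∀ w ∈ Sph v m p, IsConnected (sliceSet m p Ω w)

/-- The reflection `(x_p, r) ↦ (x_p, -r)` of `ℝ^{p+2}`. -/
def reflD (p : ℕ) (z : (Fin (p + 1) → ℝ) × ℝ) : (Fin (p + 1) → ℝ) × ℝ := (z.1, -z.2)

/-- The p-symmetric completion `Ω_D ⊆ M` of `D ⊆ ℝ^{p+2}`. -/
def OmegaD (v : ℕ → A) (m p : ℕ) (D : Set ((Fin (p + 1) → ℝ) × ℝ)) :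
    Set (Fin (m + 1) → ℝ) :=
  {x | ∃ w ∈ Sph v m p, ∃ z ∈ D, x = pt m p w z.1 z.2}

/-- `(F₁, F₂)` satisfies the even-odd (stem function) conditions on `D`. -/
def IsStem (p : ℕ) (D : Set ((Fin (p + 1) → ℝ) × ℝ))
    (F₁ F₂ : (Fin (p + 1) → ℝ) × ℝ → A) : Prop :=
  ∀ z ∈ D, F₁ (reflD p z) = F₁ z ∧ F₂ (reflD p z) = -F₂ z

/-- `f` is the generalized partial-slice function induced by the stem `(F₁, F₂)`:
`f(x_p + rω) = F₁(x_p, r) + ω F₂(x_p, r)`. -/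
def Induced (v : ℕ → A) (m p : ℕ) (D : Set ((Fin (p + 1) → ℝ) × ℝ))
    (F₁ F₂ : (Fin (p + 1) → ℝ) × ℝ → A) (f : (Fin (m + 1) → ℝ) → A) : Prop :=
  ∀ w ∈ Sph v m p, ∀ z ∈ D, f (pt m p w z.1 z.2) = F₁ z + emb v m w * F₂ z

/-- The generalized Cauchy-Riemann system for the stem `(F₁, F₂)` on `D`. -/
def StemCR (v : ℕ → A) (p : ℕ) (D : Set ((Fin (p + 1) → ℝ) × ℝ))
    (F₁ F₂ : (Fin (p + 1) → ℝ) × ℝ → A) : Prop :=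
  ∀ z ∈ D, DopSx v p F₁ z - pdSr p F₂ z = 0 ∧ DbaropSx v p F₂ z + pdSr p F₁ z = 0

/-- `f` is generalized partial-slice regular on `Ω_D`. -/
def MemGSR (v : ℕ → A) (m p : ℕ) (D : Set ((Fin (p + 1) → ℝ) × ℝ))
    (f : (Fin (m + 1) → ℝ) → A) : Prop :=
  ∃ F₁ F₂ : (Fin (p + 1) → ℝ) × ℝ → A, IsStem p D F₁ F₂ ∧
    ContDiffOn ℝ 1 F₁ D ∧ ContDiffOn ℝ 1 F₂ D ∧
    Induced v m p D F₁ F₂ f ∧ StemCR v p D F₁ F₂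

/-- `f` is a generalized partial-slice function on `Ω`. -/
def MemGS (v : ℕ → A) (m p : ℕ) (Ω : Set (Fin (m + 1) → ℝ))
    (f : (Fin (m + 1) → ℝ) → A) : Prop :=
  ∃ F₁ F₂ : (Fin (p + 1) → ℝ) × ℝ → A,
    (∀ z : (Fin (p + 1) → ℝ) × ℝ, F₁ (reflD p z) = F₁ z ∧ F₂ (reflD p z) = -F₂ z) ∧
    ∀ x ∈ Ω, f x = F₁ (projP m p x, rad m p x) +
      emb v m (normq m p x) * F₂ (projP m p x, rad m p x)

/-- Non-associative power: `a^n` with products taken from the right. -/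
def apow (a : A) (n : ℕ) : A := (fun b => a * b)^[n] 1

/-- Partial even part `PE[f](x) = (f(x) + f(x_⋄))/2`. -/
noncomputable def PE (m p : ℕ) (f : (Fin (m + 1) → ℝ) → A)
    (x : Fin (m + 1) → ℝ) : A := (2 : ℝ)⁻¹ • (f x + f (reflP m p x))

/-- Partial odd part `PO[f](x) = (f(x) - f(x_⋄))/2`. -/
noncomputable def PO (m p : ℕ) (f : (Fin (m + 1) → ℝ) → A)
    (x : Fin (m + 1) → ℝ) : A := (2 : ℝ)⁻¹ • (f x - f (reflP m p x))

/-- `Ω₀* = {x_p + x_q : x_p ∈ Ω₀, x_q ∈ ℝ^q}`. -/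
def Omega0star (m p : ℕ) (Ω₀ : Set (Fin (p + 1) → ℝ)) : Set (Fin (m + 1) → ℝ) :=
  {x | projP m p x ∈ Ω₀}

/-- The spherical derivative `f'_s(x) = (1/2) x_q⁻¹ (f(x) - f(x_⋄))`
(using `x_q⁻¹ = -x_q/|x_q|²`). -/
noncomputable def sder (v : ℕ → A) (m p : ℕ) (f : (Fin (m + 1) → ℝ) → A)
    (x : Fin (m + 1) → ℝ) : A :=
  -(((2 : ℝ) * rad m p x ^ 2)⁻¹) • (emb v m (xqpart m p x) * (f x - f (reflP m p x)))

/-- The spherical Dirac operator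
`Γ f = -(1/2) Σ_{p+1 ≤ i,j ≤ m} v_i (v_j (L_{ij} f))`. -/
noncomputable def sphericalGamma (v : ℕ → A) (m p : ℕ) (f : (Fin (m + 1) → ℝ) → A)
    (x : Fin (m + 1) → ℝ) : A :=
  -((2 : ℝ)⁻¹) • ∑ i : Fin (m + 1), ∑ j : Fin (m + 1),
    if p < (i : ℕ) ∧ p < (j : ℕ) then
      v (i : ℕ) * (v (j : ℕ) * (x i • pdF m j f x - x j • pdF m i f x)) else 0

/-- The slice Cauchy-Riemann operator `D_ω` applied to (the slice restriction of) a
function `f` on `M`, at the point `x` (with `ω = x_q/|x_q|`). -/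
noncomputable def DomCRat (v : ℕ → A) (m p : ℕ) (f : (Fin (m + 1) → ℝ) → A)
    (x : Fin (m + 1) → ℝ) : A :=
  DomCR v m p (normq m p x) (sliceFun m p f (normq m p x)) (projP m p x, rad m p x)

/-- `f` is left monogenic on `Ω`: `f ∈ C¹` and `D_x f = 0`. -/
def Monogenic (v : ℕ → A) (m : ℕ) (f : (Fin (m + 1) → ℝ) → A)
    (Ω : Set (Fin (m + 1) → ℝ)) : Prop :=
  ContDiffOn ℝ 1 f Ω ∧ ∀ x ∈ Ω, Dop v m 0 m f x = 0

/-- `f` is harmonic on `Ω`: `f ∈ C²` and `Δ_x f = 0`. -/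
def Harmonic (m : ℕ) (f : (Fin (m + 1) → ℝ) → A)
    (Ω : Set (Fin (m + 1) → ℝ)) : Prop :=
  ContDiffOn ℝ 2 f Ω ∧ ∀ x ∈ Ω, lapF m f x = 0

/-- A family of functions converges normally (locally a summable uniform bound). -/
def NormallyConvOn {E F : Type*} [TopologicalSpace E] [NormedAddCommGroup F]
    (u : ℕ → E → F) (s : Set E) : Prop :=
  ∀ x ∈ s, ∃ U ∈ nhds x, ∃ c : ℕ → ℝ, Summable c ∧ ∀ k : ℕ, ∀ y ∈ U, ‖u k y‖ ≤ c k

/-- The generalized partial-slice CK-extension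
`CK[f₀](x) = Σ_k (r^{2k}/(2k)!)(-Δ_{x_p})^k f₀(x_p)
  + ω Σ_k (r^{2k+1}/(2k+1)!)(-Δ_{x_p})^k (D_{x_p} f₀)(x_p)`. -/
noncomputable def CKe (v : ℕ → A) (m p : ℕ) (f₀ : (Fin (p + 1) → ℝ) → A)
    (x : Fin (m + 1) → ℝ) : A :=
  (∑' k : ℕ, (((-1 : ℝ) ^ k * rad m p x ^ (2 * k)) / (2 * k).factorial) •
      lapIterP p k f₀ (projP m p x)) +
  emb v m (normq m p x) *
    ∑' k : ℕ, (((-1 : ℝ) ^ k * rad m p x ^ (2 * k + 1)) / (2 * k + 1).factorial) •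
      lapIterP p k (DopP v p f₀) (projP m p x)

/-- The coefficient `Γ(q/2)(-1)^k r^{2k} / (2^{2k} k! Γ(k + q/2))`. -/
noncomputable def hgckC (q k : ℕ) (r : ℝ) : ℝ :=
  (Real.Gamma ((q : ℝ) / 2) * (-1) ^ k * r ^ (2 * k)) /
    (2 ^ (2 * k) * (k.factorial : ℝ) * Real.Gamma ((k : ℝ) + (q : ℝ) / 2))

/-- The coefficient `Γ(q/2)(-1)^k r^{2k} / (2^{2k+1} k! Γ(k + q/2 + 1))`. -/
noncomputable def gckC' (q k : ℕ) (r : ℝ) : ℝ :=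
  (Real.Gamma ((q : ℝ) / 2) * (-1) ^ k * r ^ (2 * k)) /
    (2 ^ (2 * k + 1) * (k.factorial : ℝ) * Real.Gamma ((k : ℝ) + (q : ℝ) / 2 + 1))

/-- The coefficient `Γ(q/2 + 1)(-1)^k r^{2k} / (2^{2k} k! Γ(k + q/2 + 1))`. -/
noncomputable def hgckC' (q k : ℕ) (r : ℝ) : ℝ :=
  (Real.Gamma ((q : ℝ) / 2 + 1) * (-1) ^ k * r ^ (2 * k)) /
    (2 ^ (2 * k) * (k.factorial : ℝ) * Real.Gamma ((k : ℝ) + (q : ℝ) / 2 + 1))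

/-- The monogenic generalized CK-extension `GCK[A₀]`. -/
noncomputable def GCKe (v : ℕ → A) (m p : ℕ) (A₀ : (Fin (p + 1) → ℝ) → A)
    (x : Fin (m + 1) → ℝ) : A :=
  (∑' k : ℕ, hgckC (m - p) k (rad m p x) • lapIterP p k A₀ (projP m p x)) +
  emb v m (xqpart m p x) *
    ∑' k : ℕ, gckC' (m - p) k (rad m p x) • lapIterP p k (DopP v p A₀) (projP m p x)

/-- The harmonic generalized CK-extension `HGCK[A₀, A₁]`. -/
noncomputable def HGCKe (v : ℕ → A) (m p : ℕ) (A₀ A₁ : (Fin (p + 1) → ℝ) → A)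
    (x : Fin (m + 1) → ℝ) : A :=
  (∑' k : ℕ, hgckC (m - p) k (rad m p x) • lapIterP p k A₀ (projP m p x)) +
  emb v m (xqpart m p x) *
    ∑' k : ℕ, hgckC' (m - p) k (rad m p x) • lapIterP p k A₁ (projP m p x)

/-- The operator `(1/r)∂_r`, extended to `r = 0` by its limit `∂_r²` (on even
functions). -/
noncomputable def T1 (p : ℕ) (G : (Fin (p + 1) → ℝ) × ℝ → A) :
    (Fin (p + 1) → ℝ) × ℝ → A := fun z =>
  if z.2 = 0 then pdSr2 p G z else (z.2)⁻¹ • pdSr p G z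

/-- The operator `∂_r ∘ (1/r)`, extended to `r = 0` by its limit `(1/2)∂_r²` (on odd
functions). -/
noncomputable def T2 (p : ℕ) (G : (Fin (p + 1) → ℝ) × ℝ → A) :
    (Fin (p + 1) → ℝ) × ℝ → A := fun z =>
  if z.2 = 0 then (2 : ℝ)⁻¹ • pdSr2 p G z
  else fderiv ℝ (fun t : ℝ => t⁻¹ • G (z.1, t)) z.2 1

/-- `C_q(k) = (q-1)(q-3)⋯(q-2k+1)`, `C_q(0) = 1`. -/
noncomputable def cq (q k : ℕ) : ℝ :=
  ∏ i ∈ Finset.range k, ((q : ℝ) - (2 * (i : ℝ) + 1))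

/-- Double factorial. -/
def dfac : ℕ → ℕ
  | 0 => 1
  | 1 => 1
  | n + 2 => (n + 2) * dfac n

/-- The Fueter-Sce constant `γ_q = (-1)^{(q-1)/2} (q-1)!!/(q-2)!!`. -/
noncomputable def gammaQ (q : ℕ) : ℝ :=
  (-1 : ℝ) ^ ((q - 1) / 2) * (dfac (q - 1) : ℝ) / (dfac (q - 2) : ℝ)

/-
Write `F₂ = r H`. In the flat model `M = ℝ^{p+1} × ℝ^q` the function `f` becomes
`F₁(x_p, |u|) + u H(x_p, |u|)` with `u = x_q`, and the generalized Cauchy-Riemann equations become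
the Vekua system `D_{x_p} F₁ = (r ∂_r + c) H`, `D̄_{x_p} H = -r⁻¹ ∂_r F₁` with `c = 1`.
Applying `r⁻¹ ∂_r` to both functions turns a solution with constant `c` into one with constant
`c + 2`. For every solution, `D_x f = -(q - c) H` and `Δ_x f = (q - c) f'`, where `f'` is built from
`r⁻¹ ∂_r F₁` and `r⁻¹ ∂_r H`; iterating yields the factors `q - 1, q - 3, …`.

The stem functions are only `C¹`, but a first order system with a Clifford symbol squares to the
Laplacian, so by Weyl's lemma they are smooth; the singularity of `r⁻¹` at `r = 0` is then removed
by Hadamard's lemma.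
-/

section WeylLemma

open MeasureTheory ContDiff

variable {E V ι : Type*} [NormedAddCommGroup E] [NormedSpace ℝ E]
  [NormedAddCommGroup V] [NormedSpace ℝ V]

theorem contDiff_fderiv_apply_const {η : E → V} (hη : ContDiff ℝ ∞ η) (a : E) :
    ContDiff ℝ ∞ fun y => fderiv ℝ η y a :=
  (hη.fderiv_right (by simp)).clm_apply contDiff_const

theorem tsupport_fderiv_apply_subset (η : E → V) (a : E) :
    tsupport (fun y => fderiv ℝ η y a) ⊆ tsupport η :=
  closure_minimal
    (fun _ hy => support_fderiv_subset ℝ fun h => hy (by simp only [h, zero_apply]))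
    (isClosed_tsupport _)

theorem fderiv_fderiv_apply_comm {G : E → V} {y : E} (hG : ContDiffAt ℝ 2 G y) (a b : E) :
    fderiv ℝ (fun u => fderiv ℝ G u a) y b = fderiv ℝ (fun u => fderiv ℝ G u b) y a := by
  have hd : DifferentiableAt ℝ (fderiv ℝ G) y :=
    (hG.fderiv_right (m := 1) (by norm_num)).differentiableAt one_ne_zero
  have second (a b : E) :
      fderiv ℝ (fun u => fderiv ℝ G u a) y b = fderiv ℝ (fderiv ℝ G) y b a := by
    simp [fderiv_clm_apply hd (differentiableAt_const a)]
  rw [second, second, (hG.isSymmSndFDerivAt (by simp)).eq]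

theorem exists_contDiff_hasCompactSupport_eqOn_closedBall [FiniteDimensional ℝ E] {n : ℕ∞}
    {D : Set E} (hD : IsOpen D) {G : E → V} (hG : ContDiffOn ℝ n G D) {z₀ : E} (hz₀ : z₀ ∈ D) :
    ∃ ρ > 0, Metric.closedBall z₀ ρ ⊆ D ∧ ∃ G' : E → V, ContDiff ℝ n G' ∧ HasCompactSupport G' ∧
      Set.EqOn G' G (Metric.closedBall z₀ ρ) := by
  obtain ⟨R, hR, hball⟩ := Metric.nhds_basis_closedBall.mem_iff.1 (hD.mem_nhds hz₀)
  let χ : ContDiffBump z₀ := ⟨R / 2, R, half_pos hR, half_lt_self hR⟩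
  have hχ : tsupport χ ⊆ D := χ.tsupport_eq.trans_subset hball
  refine ⟨R / 2, half_pos hR,
    (Metric.closedBall_subset_closedBall (half_le_self hR.le)).trans hball,
    fun y => χ y • G y, contDiff_iff_contDiffAt.2 fun y => ?_, χ.hasCompactSupport.smul_right,
    fun y hy => by simp only [χ.one_of_mem_closedBall hy, one_smul]⟩
  by_cases hy : y ∈ tsupport χ
  · exact χ.contDiff.contDiffAt.smul (hG.contDiffAt (hD.mem_nhds (hχ hy)))
  · have hzero : (fun y => χ y • G y) =ᶠ[𝓝 y] fun _ => 0 := by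
      filter_upwards [notMem_tsupport_iff_eventuallyEq.1 hy] with u hu
      simp only [hu, Pi.zero_apply, zero_smul]
    exact contDiffAt_const.congr_of_eventuallyEq hzero

theorem exists_hasDerivAt_eq_zero_of_one_le : ∃ g ψ : ℝ → ℝ, ContDiff ℝ ∞ g ∧ ContDiff ℝ ∞ ψ ∧
    (∀ t, HasDerivAt g (ψ t) t) ∧ (∀ t, 0 ≤ ψ t) ∧ 0 < ψ 0 ∧ ∀ t, 1 ≤ t → g t = 0 ∧ ψ t = 0 := by
  let ψ : ℝ → ℝ := fun t => expNegInvGlue (1 - t)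
  have hψ : ContDiff ℝ ∞ ψ := expNegInvGlue.contDiff.comp (contDiff_const.sub contDiff_id)
  have hψ0 : ∀ t, 1 ≤ t → ψ t = 0 := fun t ht => expNegInvGlue.zero_of_nonpos (by linarith)
  have hg : ∀ t, HasDerivAt (fun t => ∫ u in (1 : ℝ)..t, ψ u) (ψ t) t := fun t =>
    intervalIntegral.integral_hasDerivAt_right (hψ.continuous.intervalIntegrable _ _)
      (hψ.continuous.stronglyMeasurableAtFilter _ _) hψ.continuous.continuousAt
  refine ⟨fun t => ∫ u in (1 : ℝ)..t, ψ u, ψ, contDiff_infty_iff_deriv.2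
      ⟨fun t => (hg t).differentiableAt, ?_⟩, hψ, hg, fun t => expNegInvGlue.nonneg _,
    expNegInvGlue.pos_of_pos (by norm_num), fun t ht => ⟨?_, hψ0 t ht⟩⟩
  · rwa [show deriv (fun t => ∫ u in (1 : ℝ)..t, ψ u) = ψ from funext fun t => (hg t).deriv]
  · refine intervalIntegral.integral_zero_ae (.of_forall fun u hu => hψ0 u ?_)
    exact (Set.uIoc_of_le ht ▸ hu).1.le

/-- `φ` is a bump function of nonzero integral all of whose first moments are exact: in the
coordinates of the basis `b`, the field `y ↦ φ y • y` is the gradient of the bump function `η`. -/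
structure IsGradientBump [MeasurableSpace E] (b : Module.Basis ι ℝ E) (μ : Measure E)
    (φ η : E → ℝ) : Prop where
  contDiff : ContDiff ℝ ∞ φ
  hasCompactSupport : HasCompactSupport φ
  integral_ne_zero : ∫ y, φ y ∂μ ≠ 0
  contDiff_potential : ContDiff ℝ ∞ η
  hasCompactSupport_potential : HasCompactSupport η
  fderiv_potential : ∀ y i, fderiv ℝ η y (b i) = φ y * b.coord i y

theorem exists_isGradientBump [MeasurableSpace E] [BorelSpace E] [Finite ι]
    (b : Module.Basis ι ℝ E) (μ : Measure E) [μ.IsAddHaarMeasure] :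
    ∃ φ η : E → ℝ, IsGradientBump b μ φ η := by
  classical
  cases nonempty_fintype ι
  have : FiniteDimensional ℝ E := b.finiteDimensional_of_finite
  obtain ⟨g, ψ, hg, hψ, hgψ, hψ0, hψpos, hzero⟩ := exists_hasDerivAt_eq_zero_of_one_le
  let e : E ≃L[ℝ] EuclideanSpace ℝ ι := b.equivFunL.trans (EuclideanSpace.equiv ι ℝ).symm
  have compact {h : ℝ → ℝ} (hh : ∀ t, 1 ≤ t → h t = 0) :
      HasCompactSupport fun y => h (‖e y‖ ^ 2) := by
    refine HasCompactSupport.comp_homeomorph (f := fun u => h (‖u‖ ^ 2)) ?_ e.toHomeomorph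
    refine .intro (isCompact_closedBall 0 1) fun u hu => hh _ (one_le_pow₀ ?_)
    exact (not_le.1 (mem_closedBall_zero_iff.not.1 hu)).le
  have smooth {h : ℝ → ℝ} (hh : ContDiff ℝ ∞ h) : ContDiff ℝ ∞ fun y => h (‖e y‖ ^ 2) :=
    hh.comp (e.contDiff.norm_sq ℝ)
  refine ⟨fun y => ψ (‖e y‖ ^ 2), fun y => 2⁻¹ * g (‖e y‖ ^ 2), smooth hψ,
    compact fun t ht => (hzero t ht).2, ?_, contDiff_const.mul (smooth hg),
    (compact fun t ht => (hzero t ht).1).mul_left, fun y i => ?_⟩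
  · exact ((smooth hψ).continuous.integral_pos_of_hasCompactSupport_nonneg_nonzero
      (compact fun t ht => (hzero t ht).2) (fun _ => hψ0 _) (x := 0) (by simpa using hψpos.ne')).ne'
  · have hnorm : HasFDerivAt (fun y => ‖e y‖ ^ 2) _ y := e.hasFDerivAt.norm_sq
    have hη : HasFDerivAt (fun y => 2⁻¹ * g (‖e y‖ ^ 2)) _ y :=
      ((hgψ (‖e y‖ ^ 2)).comp_hasFDerivAt y hnorm).const_mul 2⁻¹
    have hei : e (b i) = EuclideanSpace.single i 1 := by
      ext j; simp [e, Finsupp.single_apply, eq_comm]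
    have hinner : inner ℝ (e y) (e (b i)) = b.coord i y := by
      simp [hei, EuclideanSpace.inner_single_right, e]
    simp only [hη.fderiv, smul_apply, ContinuousLinearMap.comp_apply, ContinuousLinearEquiv.coe_coe,
      innerSL_apply_apply, hinner, smul_eq_mul, nsmul_eq_mul, Nat.cast_ofNat]
    ring

/-- Weak harmonicity of a `C¹` function `G` on `D`: the Dirichlet form of `G`, in the coordinates
of the basis `b`, vanishes against every test function supported in `D`. -/
def IsWeaklyHarmonicOn [Fintype ι] [MeasurableSpace E] (b : Module.Basis ι ℝ E) (μ : Measure E)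
    (G : E → V) (D : Set E) : Prop :=
  ∀ η : E → ℝ, ContDiff ℝ ∞ η → HasCompactSupport η → tsupport η ⊆ D →
    ∑ i, ∫ y, fderiv ℝ η y (b i) • fderiv ℝ G y (b i) ∂μ = 0

variable [MeasurableSpace E]

section Weak

variable [Fintype ι] {b : Module.Basis ι ℝ E} {μ : Measure E} {G : E → V} {D : Set E}

theorem IsWeaklyHarmonicOn.congr_mono (h : IsWeaklyHarmonicOn b μ G D) {U : Set E}
    (hU : IsOpen U) (hUD : U ⊆ D) {G' : E → V} (hGG' : Set.EqOn G' G U) :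
    IsWeaklyHarmonicOn b μ G' U := by
  intro η hη hc hs
  rw [← h η hη hc (hs.trans hUD)]
  refine Finset.sum_congr rfl fun i _ => integral_congr_ae (.of_forall fun y => ?_)
  by_cases hy : y ∈ tsupport η
  · simp only [(hGG'.eventuallyEq_of_mem (hU.mem_nhds (hs hy))).fderiv_eq]
  · simp only [fderiv_of_notMem_tsupport ℝ hy, zero_apply, zero_smul]

theorem IsWeaklyHarmonicOn.sum_integral_comp_sub_smul [BorelSpace E] [μ.IsAddHaarMeasure]
    [FiniteDimensional ℝ E] (h : IsWeaklyHarmonicOn b μ G D) {η : E → ℝ} (hη : ContDiff ℝ ∞ η)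
    (hc : HasCompactSupport η) {z : E} {ε : ℝ} (hε : ε ≠ 0)
    (hD : ∀ y ∈ tsupport η, z - ε • y ∈ D) :
    ∑ i, ∫ y, fderiv ℝ η y (b i) • fderiv ℝ G (z - ε • y) (b i) ∂μ = 0 := by
  let τ : E ≃ₜ E := (Homeomorph.subLeft z).trans (Homeomorph.smulOfNeZero ε⁻¹ (inv_ne_zero hε))
  have hτ : ∀ u, τ u = ε⁻¹ • (z - u) := fun _ => rfl
  have hderiv : ∀ u a, fderiv ℝ (η ∘ τ) u a = -ε⁻¹ * fderiv ℝ η (τ u) a := by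
    intro u a
    have hτd : HasFDerivAt τ (ε⁻¹ • -ContinuousLinearMap.id ℝ E) u :=
      ((hasFDerivAt_id u).const_sub z).const_smul ε⁻¹
    rw [((hη.differentiable (by simp) _).hasFDerivAt.comp u hτd).fderiv]
    simp
  have hsupp : tsupport (η ∘ τ) ⊆ D := by
    rw [tsupport_comp_eq_preimage]
    intro u hu
    simpa [hτ, smul_smul, hε] using hD _ hu
  have hweak := h (η ∘ τ) (hη.comp (contDiff_const.smul (contDiff_const.sub contDiff_id)))
    (hc.comp_homeomorph τ) hsupp
  have hsubst : ∀ i, ∫ y, fderiv ℝ η y (b i) • fderiv ℝ G (z - ε • y) (b i) ∂μ =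
      |(ε ^ Module.finrank ℝ E)⁻¹| • ∫ u, fderiv ℝ η (τ u) (b i) • fderiv ℝ G u (b i) ∂μ := by
    intro i
    let T : E → V := fun u => fderiv ℝ η (ε⁻¹ • u) (b i) • fderiv ℝ G (z - u) (b i)
    calc ∫ y, fderiv ℝ η y (b i) • fderiv ℝ G (z - ε • y) (b i) ∂μ
        = ∫ y, T (ε • y) ∂μ := by simp only [T, smul_smul, inv_mul_cancel₀ hε, one_smul]
      _ = |(ε ^ Module.finrank ℝ E)⁻¹| • ∫ u, T (z - u) ∂μ := by
          rw [Measure.integral_comp_smul, integral_sub_left_eq_self T μ z]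
      _ = _ := by simp only [T, sub_sub_cancel, hτ]
  simp only [hderiv, mul_smul, integral_smul, ← Finset.smul_sum, smul_eq_zero] at hweak
  simp only [hsubst, ← Finset.smul_sum, hweak.resolve_left (neg_ne_zero.2 (inv_ne_zero hε)),
    smul_zero]

end Weak

/-- The mean of `G` around `z` at scale `ε` with respect to the weight `φ`. -/
noncomputable def scaledMean (μ : Measure E) (φ : E → ℝ) (G : E → V) (z : E) (ε : ℝ) : V :=
  ∫ y, φ y • G (z - ε • y) ∂μ

variable [BorelSpace E] [FiniteDimensional ℝ E] {μ : Measure E} {φ : E → ℝ} {G : E → V}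

theorem hasDerivAt_scaledMean [IsFiniteMeasureOnCompacts μ] (hφ : Continuous φ)
    (hφc : HasCompactSupport φ) (hG : ContDiff ℝ 1 G) (hGc : HasCompactSupport G) (z : E) (ε : ℝ) :
    HasDerivAt (scaledMean μ φ G z) (-∫ y, φ y • fderiv ℝ G (z - ε • y) y ∂μ) ε := by
  obtain ⟨C, hC⟩ := (hGc.fderiv ℝ).exists_bound_of_continuous (hG.continuous_fderiv one_ne_zero)
  rw [← integral_neg]
  refine (hasDerivAt_integral_of_dominated_loc_of_deriv_le (s := Set.univ)
    (F := fun e y => φ y • G (z - e • y)) (F' := fun e y => -(φ y • fderiv ℝ G (z - e • y) y))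
    (bound := fun y => ‖φ y‖ * (C * ‖y‖)) univ_mem (.of_forall fun e => ?_) ?_ ?_
    (.of_forall fun y e _ => ?_) ?_ (.of_forall fun y e _ => ?_)).2
  · exact (hφ.smul (hG.continuous.comp (by fun_prop))).aestronglyMeasurable
  · exact (hφ.smul (hG.continuous.comp (by fun_prop))).integrable_of_hasCompactSupport
      hφc.smul_right
  · exact (hφ.smul (((hG.continuous_fderiv one_ne_zero).comp (by fun_prop)).clm_apply
      continuous_id)).neg.aestronglyMeasurable
  · rw [norm_neg, norm_smul]
    gcongr
    exact (fderiv ℝ G (z - e • y)).le_of_opNorm_le (hC _) y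
  · exact (hφ.norm.mul (by fun_prop)).integrable_of_hasCompactSupport hφc.norm.mul_right
  · have hline : HasDerivAt (fun e : ℝ => z - e • y) (-y) e := by
      simpa using ((hasDerivAt_id e).smul_const y).const_sub z
    have hcomp : HasDerivAt (fun e : ℝ => G (z - e • y)) _ e :=
      (hG.differentiable one_ne_zero _).hasFDerivAt.comp_hasDerivAt e hline
    simpa only [map_neg, smul_neg] using hcomp.fun_const_smul (φ y)

theorem contDiff_scaledMean [μ.IsAddHaarMeasure] [CompleteSpace V] (hφ : ContDiff ℝ ∞ φ)
    (hφc : HasCompactSupport φ) (hG : Continuous G) {ε : ℝ} (hε : ε ≠ 0) :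
    ContDiff ℝ ∞ fun z => scaledMean μ φ G z ε := by
  let φε : E → ℝ := fun u => φ (ε⁻¹ • u)
  have hconv : ∀ z, scaledMean μ φ G z ε = |(ε ^ Module.finrank ℝ E)⁻¹| •
      convolution φε G (ContinuousLinearMap.lsmul ℝ ℝ) μ z := by
    intro z
    calc scaledMean μ φ G z ε = ∫ y, (fun u => φε u • G (z - u)) (ε • y) ∂μ := by
          simp only [scaledMean, φε, smul_smul, inv_mul_cancel₀ hε, one_smul]
      _ = _ := Measure.integral_comp_smul μ (fun u => φε u • G (z - u)) ε
  simp only [hconv]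
  exact ((hφc.comp_smul (inv_ne_zero hε)).contDiff_convolution_left (n := ⊤) _
    (hφ.comp (contDiff_const.smul contDiff_id)) hG.locallyIntegrable).const_smul _

variable [Fintype ι] {b : Module.Basis ι ℝ E} {η : E → ℝ} {D : Set E}

theorem IsWeaklyHarmonicOn.integral_fderiv_comp_sub_smul_eq_zero [μ.IsAddHaarMeasure]
    (h : IsWeaklyHarmonicOn b μ G D) (hG : ContDiff ℝ 1 G)
    (hb : IsGradientBump b μ φ η) {z : E} {ε : ℝ} (hε : ε ≠ 0)
    (hD : ∀ y ∈ tsupport η, z - ε • y ∈ D) :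
    ∫ y, φ y • fderiv ℝ G (z - ε • y) y ∂μ = 0 := by
  have expand : ∀ y, φ y • fderiv ℝ G (z - ε • y) y =
      ∑ i, fderiv ℝ η y (b i) • fderiv ℝ G (z - ε • y) (b i) := by
    intro y
    conv_lhs => enter [2, 2]; rw [← b.sum_repr y]
    simp only [map_sum, map_smul, Finset.smul_sum, smul_smul, hb.fderiv_potential,
      Module.Basis.coord_apply]
  have integrable (i : ι) :
      Integrable (fun y => fderiv ℝ η y (b i) • fderiv ℝ G (z - ε • y) (b i)) μ := by
    refine Continuous.integrable_of_hasCompactSupport (.smul ?_ ?_)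
      (HasCompactSupport.smul_right ?_)
    · exact (contDiff_fderiv_apply_const hb.contDiff_potential _).continuous
    · exact ((hG.continuous_fderiv one_ne_zero).comp (by fun_prop)).clm_apply continuous_const
    · exact hb.hasCompactSupport_potential.fderiv_apply ℝ (b i)
  simp only [expand, integral_finsetSum _ fun i _ => integrable i]
  exact h.sum_integral_comp_sub_smul hb.contDiff_potential hb.hasCompactSupport_potential hε hD

theorem IsWeaklyHarmonicOn.scaledMean_eq [μ.IsAddHaarMeasure] [CompleteSpace V]
    (h : IsWeaklyHarmonicOn b μ G D) (hG : ContDiff ℝ 1 G) (hGc : HasCompactSupport G)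
    (hb : IsGradientBump b μ φ η) {z : E} {ε₀ : ℝ} (hε₀ : 0 < ε₀)
    (hD : ∀ ε, 0 < ε → ε < ε₀ → ∀ y ∈ tsupport η, z - ε • y ∈ D) :
    scaledMean μ φ G z ε₀ = (∫ y, φ y ∂μ) • G z := by
  have hderiv := hasDerivAt_scaledMean (μ := μ) hb.contDiff.continuous hb.hasCompactSupport hG hGc z
  obtain ⟨c, hc⟩ : ∃ c, Set.EqOn (scaledMean μ φ G z) (fun _ => c) (Set.Ioo 0 ε₀) := by
    refine isOpen_Ioo.exists_is_const_of_deriv_eq_zero isPreconnected_Ioo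
      (fun ε _ => (hderiv ε).differentiableAt.differentiableWithinAt) fun ε hε => ?_
    rw [(hderiv ε).deriv, h.integral_fderiv_comp_sub_smul_eq_zero hG hb hε.1.ne' (hD ε hε.1 hε.2),
      neg_zero, Pi.zero_apply]
  have hconst := hc.closure
    (continuous_iff_continuousAt.2 fun ε => (hderiv ε).continuousAt) continuous_const
  rw [closure_Ioo hε₀.ne] at hconst
  calc scaledMean μ φ G z ε₀ = scaledMean μ φ G z 0 :=
        (hconst ⟨hε₀.le, le_rfl⟩).trans (hconst ⟨le_rfl, hε₀.le⟩).symm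
    _ = (∫ y, φ y ∂μ) • G z := by
        simp only [scaledMean, zero_smul, sub_zero, integral_smul_const]

theorem IsWeaklyHarmonicOn.contDiffOn [μ.IsAddHaarMeasure] [CompleteSpace V]
    (h : IsWeaklyHarmonicOn b μ G D) (hD : IsOpen D) (hG : ContDiffOn ℝ 1 G D) :
    ContDiffOn ℝ ∞ G D := by
  intro z₀ hz₀
  refine ContDiffAt.contDiffWithinAt ?_
  obtain ⟨φ, η, hb⟩ := exists_isGradientBump b μ
  obtain ⟨ρ, hρ, hρD, G', hG', hGc, hGG'⟩ :=
    exists_contDiff_hasCompactSupport_eqOn_closedBall hD (n := 1) hG hz₀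
  obtain ⟨R, hR, hηR⟩ := hb.hasCompactSupport_potential.isBounded.subset_closedBall_lt 0 0
  have hweak := h.congr_mono Metric.isOpen_ball (Metric.ball_subset_closedBall.trans hρD)
    (hGG'.mono Metric.ball_subset_closedBall)
  let ε₀ : ℝ := ρ / 2 / R
  have hε₀ : 0 < ε₀ := by positivity
  have hmean : ∀ z ∈ Metric.ball z₀ (ρ / 2), scaledMean μ φ G' z ε₀ = (∫ y, φ y ∂μ) • G z := by
    intro z hz
    have hzρ : z ∈ Metric.closedBall z₀ ρ := Metric.ball_subset_closedBall
      (Metric.ball_subset_ball (half_le_self hρ.le) hz)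
    rw [← hGG' hzρ]
    refine hweak.scaledMean_eq hG' hGc hb hε₀ fun ε hε hεε₀ y hy => ?_
    have hshift : ‖ε • y‖ < ρ / 2 := by
      calc ‖ε • y‖ = ε * ‖y‖ := by rw [norm_smul, Real.norm_of_nonneg hε.le]
        _ ≤ ε * R := by gcongr; exact mem_closedBall_zero_iff.1 (hηR hy)
        _ < ρ / 2 := (lt_div_iff₀ hR).1 hεε₀
    rw [mem_ball_iff_norm] at hz ⊢
    calc ‖z - ε • y - z₀‖ = ‖(z - z₀) - ε • y‖ := by rw [sub_right_comm]
      _ ≤ ‖z - z₀‖ + ‖ε • y‖ := norm_sub_le _ _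
      _ < ρ := by linarith
  have hsmooth := (contDiff_scaledMean (μ := μ) hb.contDiff hb.hasCompactSupport hG'.continuous
    hε₀.ne').const_smul (∫ y, φ y ∂μ)⁻¹
  refine hsmooth.contDiffAt.congr_of_eventuallyEq ?_
  filter_upwards [Metric.ball_mem_nhds z₀ (half_pos hρ)] with z hz
  simp only [hmean z hz, inv_smul_smul₀ hb.integral_ne_zero]

end WeylLemma

section EllipticRegularity

open MeasureTheory ContDiff

variable {E V W ι κ : Type*} [NormedAddCommGroup E] [NormedSpace ℝ E] [NormedAddCommGroup V]
  [NormedSpace ℝ V] [NormedAddCommGroup W] [NormedSpace ℝ W]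

/-- The polarized form of `(∑ i, ξ i • P i) ∘ (∑ i, ξ i • Q i) = ∑ i, ξ i ^ 2`: the first order
operators with coefficients `P` and `Q` compose to the Laplacian. -/
def IsCliffordPair [DecidableEq ι] (P : ι → W →L[ℝ] V) (Q : ι → V →L[ℝ] W) : Prop :=
  ∀ i j a, P i (Q j a) + P j (Q i a) = if i = j then (2 : ℝ) • a else 0

theorem IsCliffordPair.sum_apply_sum_apply [Fintype ι] [DecidableEq ι] {P : ι → W →L[ℝ] V}
    {Q : ι → V →L[ℝ] W} (h : IsCliffordPair P Q) {M : ι → ι → V} (hM : ∀ i j, M i j = M j i) :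
    ∑ i, P i (∑ j, Q j (M i j)) = ∑ i, M i i := by
  refine smul_right_injective V (two_ne_zero (α := ℝ)) ?_
  calc (2 : ℝ) • ∑ i, P i (∑ j, Q j (M i j))
      = ∑ i, ∑ j, P i (Q j (M i j)) + ∑ i, ∑ j, P j (Q i (M i j)) := by
        rw [Finset.sum_comm (f := fun i j => P j (Q i (M i j)))]
        simp only [two_smul, map_sum, fun i j => hM j i]
    _ = ∑ i, ∑ j, if i = j then (2 : ℝ) • M i j else 0 := by
        simp only [← Finset.sum_add_distrib, h _ _ _]
    _ = (2 : ℝ) • ∑ i, M i i := by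
        simp only [Finset.sum_ite_eq, Finset.mem_univ, if_true, Finset.smul_sum]

theorem IsCliffordPair.comp_injective [DecidableEq ι] [DecidableEq κ] {P : ι → W →L[ℝ] V}
    {Q : ι → V →L[ℝ] W} (h : IsCliffordPair P Q) {σ : κ → ι} (hσ : Function.Injective σ) :
    IsCliffordPair (P ∘ σ) (Q ∘ σ) := fun i j a => by
  simpa [hσ.eq_iff] using h (σ i) (σ j) a

/-- The first order operator `∑ i, Q i ∂_{a i}`. -/
noncomputable def diracOp [Fintype ι] (Q : ι → V →L[ℝ] W) (a : ι → E) (g : E → V) (x : E) : W :=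
  ∑ i, Q i (fderiv ℝ g x (a i))

/-- The second order operator `∑ i, ∂_{a i} ∂_{a i}`. -/
noncomputable def laplacianOp [Fintype ι] (a : ι → E) (g : E → V) (x : E) : V :=
  ∑ i, fderiv ℝ (fun y => fderiv ℝ g y (a i)) x (a i)

theorem fderiv_diracOp_apply [Fintype ι] (Q : ι → V →L[ℝ] W) {a : ι → E} {g : E → V} {x : E}
    (hg : ∀ i, DifferentiableAt ℝ (fun y => fderiv ℝ g y (a i)) x) (w : E) :
    fderiv ℝ (diracOp Q a g) x w = ∑ i, Q i (fderiv ℝ (fun y => fderiv ℝ g y (a i)) x w) := by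
  have hderiv : HasFDerivAt (diracOp Q a g)
      (∑ i, (Q i).comp (fderiv ℝ (fun y => fderiv ℝ g y (a i)) x)) x :=
    .fun_sum fun i _ => (Q i).hasFDerivAt.comp x (hg i).hasFDerivAt
  simp only [hderiv.fderiv, sum_apply, ContinuousLinearMap.comp_apply]

theorem IsCliffordPair.diracOp_diracOp [Fintype ι] [DecidableEq ι] {P : ι → W →L[ℝ] V}
    {Q : ι → V →L[ℝ] W} (h : IsCliffordPair P Q) (a : ι → E) {g : E → V} {x : E}
    (hg : ContDiffAt ℝ 2 g x) : diracOp P a (diracOp Q a g) x = laplacianOp a g x := by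
  have hd (i : ι) : DifferentiableAt ℝ (fun y => fderiv ℝ g y (a i)) x :=
    ((hg.fderiv_right (m := 1) (by norm_num)).differentiableAt one_ne_zero).clm_apply
      (differentiableAt_const (a i))
  simp only [diracOp, laplacianOp]
  rw [← h.sum_apply_sum_apply fun i j => fderiv_fderiv_apply_comm hg (a j) (a i)]
  exact Finset.sum_congr rfl fun i _ => congrArg (P i) (fderiv_diracOp_apply Q hd (a i))

theorem integrable_smul_of_tsupport_subset {X : Type*} [TopologicalSpace X] [T2Space X]
    [MeasurableSpace X] [OpensMeasurableSpace X] {μ : Measure X} [IsFiniteMeasureOnCompacts μ]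
    {D : Set X} {η : X → ℝ} {g : X → V}
    (hη : Continuous η) (hc : HasCompactSupport η) (hs : tsupport η ⊆ D)
    (hg : ContinuousOn g D) : Integrable (fun y => η y • g y) μ := by
  rw [← integrableOn_iff_integrable_of_support_subset (s := tsupport η)]
  · exact (hη.continuousOn.smul (hg.mono hs)).integrableOn_compact hc
  · exact (Function.support_smul_subset_left η g).trans (subset_tsupport η)

variable [FiniteDimensional ℝ E] {D : Set E}

section Integration

variable [MeasurableSpace E] [BorelSpace E] {μ : Measure E} {η : E → ℝ}

theorem integral_fderiv_smul_fderiv_comm [μ.IsAddHaarMeasure] (hD : IsOpen D) {G : E → V}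
    (hη : ContDiff ℝ ∞ η) (hc : HasCompactSupport η) (hs : tsupport η ⊆ D)
    (hG : ContDiffOn ℝ 1 G D) (a b : E) :
    ∫ y, fderiv ℝ η y a • fderiv ℝ G y b ∂μ = ∫ y, fderiv ℝ η y b • fderiv ℝ G y a ∂μ := by
  have by_parts (a b : E) : ∫ y, fderiv ℝ η y a • fderiv ℝ G y b ∂μ =
      -∫ y, fderiv ℝ (fun u => fderiv ℝ η u a) y b • G y ∂μ := by
    have hηa := contDiff_fderiv_apply_const hη a
    have hηac := hc.fderiv_apply ℝ a
    have hηaD := (tsupport_fderiv_apply_subset η a).trans hs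
    refine integral_smul_fderiv_eq_neg_fderiv_smul_of_integrable ?_ ?_ ?_
      (fun y _ => hηa.differentiable (by simp) y)
      fun y hy => (hG.contDiffAt (hD.mem_nhds (hηaD hy))).differentiableAt one_ne_zero
    · exact integrable_smul_of_tsupport_subset (contDiff_fderiv_apply_const hηa b).continuous
        (hηac.fderiv_apply ℝ b) ((tsupport_fderiv_apply_subset _ b).trans hηaD) hG.continuousOn
    · exact integrable_smul_of_tsupport_subset hηa.continuous hηac hηaD
        ((hG.continuousOn_fderiv_of_isOpen hD le_rfl).clm_apply continuousOn_const)
    · exact integrable_smul_of_tsupport_subset hηa.continuous hηac hηaD hG.continuousOn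
  rw [by_parts, by_parts]
  simp only [fun y => fderiv_fderiv_apply_comm (hη.contDiffAt.of_le ENat.LEInfty.out (x := y)) a b]

end Integration

theorem contDiffOn_of_diracOp_eq_zero [Fintype ι] [DecidableEq ι] [CompleteSpace V]
    [CompleteSpace W] (b : Module.Basis ι ℝ E) {P : ι → W →L[ℝ] V} {Q : ι → V →L[ℝ] W}
    (hPQ : IsCliffordPair P Q) (hD : IsOpen D) {G : E → V} (hG : ContDiffOn ℝ 1 G D)
    (hQG : ∀ y ∈ D, diracOp Q b G y = 0) :
    ContDiffOn ℝ ∞ G D := by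
  borelize E
  refine IsWeaklyHarmonicOn.contDiffOn (b := b) (μ := Measure.addHaar) (fun η hη hc hs => ?_) hD hG
  have integrable (i j : ι) :
      Integrable (fun y => fderiv ℝ η y (b i) • fderiv ℝ G y (b j)) Measure.addHaar :=
    integrable_smul_of_tsupport_subset (contDiff_fderiv_apply_const hη _).continuous
      (hc.fderiv_apply ℝ _) ((tsupport_fderiv_apply_subset η _).trans hs)
      ((hG.continuousOn_fderiv_of_isOpen hD le_rfl).clm_apply continuousOn_const)
  rw [← hPQ.sum_apply_sum_apply
    (M := fun i j => ∫ y, fderiv ℝ η y (b i) • fderiv ℝ G y (b j) ∂Measure.addHaar)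
    fun i j => integral_fderiv_smul_fderiv_comm hD hη hc hs hG (b i) (b j)]
  refine Finset.sum_eq_zero fun i _ => ?_
  have hQint : ∑ j, Q j (∫ y, fderiv ℝ η y (b i) • fderiv ℝ G y (b j) ∂Measure.addHaar) =
      ∫ y, fderiv ℝ η y (b i) • diracOp Q b G y ∂Measure.addHaar := by
    simp only [diracOp, ← (Q _).integral_comp_comm (integrable i _), map_smul, Finset.smul_sum]
    exact (integral_finsetSum _ fun j _ => by
      simpa only [map_smul] using (Q j).integrable_comp (integrable i j)).symm
  rw [hQint, integral_eq_zero_of_ae (.of_forall fun y => ?_), map_zero]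
  by_cases hy : y ∈ tsupport η
  · simp only [hQG y (hs hy), smul_zero, Pi.zero_apply]
  · simp only [fderiv_of_notMem_tsupport ℝ hy, zero_apply, zero_smul, Pi.zero_apply]

end EllipticRegularity

section HadamardQuotient

open ContDiff

variable {E V : Type*} [NormedAddCommGroup E] [NormedSpace ℝ E] [NormedAddCommGroup V]
  [NormedSpace ℝ V]

theorem hasFDerivAt_intervalIntegral_of_contDiff [ProperSpace E] {K : E × ℝ → V}
    (hK : ContDiff ℝ 1 K) (a b : ℝ) (z : E) :
    HasFDerivAt (fun z => ∫ t in a..b, K (z, t))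
      (∫ t in a..b, (fderiv ℝ K (z, t)).comp (ContinuousLinearMap.inl ℝ E ℝ)) z := by
  have hK' : Continuous fun y => (fderiv ℝ K y).comp (ContinuousLinearMap.inl ℝ E ℝ) :=
    (hK.continuous_fderiv one_ne_zero).clm_comp continuous_const
  obtain ⟨C, hC⟩ := ((isCompact_closedBall z 1).prod
    (isCompact_uIcc (a := a) (b := b))).exists_bound_of_continuousOn hK'.continuousOn
  refine intervalIntegral.hasFDerivAt_integral_of_dominated_of_fderiv_le
    (F' := fun z t => (fderiv ℝ K (z, t)).comp (ContinuousLinearMap.inl ℝ E ℝ))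
    (bound := fun _ => C) (Metric.closedBall_mem_nhds z one_pos) (.of_forall fun y => ?_) ?_ ?_
    (.of_forall fun t ht y hy => hC (y, t) ⟨hy, Set.uIoc_subset_uIcc ht⟩)
    intervalIntegrable_const (.of_forall fun t _ y _ => ?_)
  · exact (hK.continuous.comp (by fun_prop)).aestronglyMeasurable
  · exact (hK.continuous.comp (by fun_prop)).intervalIntegrable _ _
  · exact (hK'.comp (by fun_prop : Continuous fun t : ℝ => (z, t))).aestronglyMeasurable
  · exact (hK.differentiable one_ne_zero (y, t)).hasFDerivAt.comp y (hasFDerivAt_prodMk_left y t)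

theorem contDiff_intervalIntegral [FiniteDimensional ℝ E] [CompleteSpace V] {K : E × ℝ → V}
    (hK : ContDiff ℝ ∞ K) (a b : ℝ) : ContDiff ℝ ∞ fun z => ∫ t in a..b, K (z, t) := by
  rw [contDiff_infty]
  intro n
  induction n generalizing K with
  | zero =>
    exact contDiff_zero.2 <| continuous_iff_continuousAt.2 fun z =>
      (hasFDerivAt_intervalIntegral_of_contDiff (hK.of_le (by simp)) a b z).continuousAt
  | succ n ih =>
    have hderiv := hasFDerivAt_intervalIntegral_of_contDiff (hK.of_le (by simp)) a b
    rw [Nat.cast_add, Nat.cast_one]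
    refine contDiff_succ_iff_fderiv_apply.2
      ⟨fun z => (hderiv z).differentiableAt, by simp, fun w => ?_⟩
    have hdir : (fun z => fderiv ℝ (fun z => ∫ t in a..b, K (z, t)) z w) =
        fun z => ∫ t in a..b, fderiv ℝ K (z, t) (w, 0) := by
      ext z
      rw [(hderiv z).fderiv, ContinuousLinearMap.intervalIntegral_apply]
      · rfl
      · have := (hK.continuous_fderiv (by simp)).clm_comp
          (continuous_const (y := ContinuousLinearMap.inl ℝ E ℝ))
        exact (this.comp (by fun_prop : Continuous fun t : ℝ => (z, t))).intervalIntegrable _ _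
    rw [hdir]
    exact ih (contDiff_fderiv_apply_const hK (w, 0))

/-- The quotient of `O` by the last coordinate `r`, with the value `∂_r O` at `r = 0`. It is
meant for functions `O` vanishing at `r = 0`. -/
noncomputable def hadamardQuotient (O : E × ℝ → V) (z : E × ℝ) : V :=
  if z.2 = 0 then fderiv ℝ O z (0, 1) else z.2⁻¹ • O z

theorem snd_smul_hadamardQuotient {O : E × ℝ → V} {z : E × ℝ} (hO : z.2 = 0 → O z = 0) :
    z.2 • hadamardQuotient O z = O z := by
  rcases eq_or_ne z.2 0 with h | h
  · rw [h, zero_smul, hO h]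
  · rw [hadamardQuotient, if_neg h, smul_inv_smul₀ h]

theorem hadamardQuotient_eq_integral [CompleteSpace V] {O : E × ℝ → V} (hO : ContDiff ℝ 1 O)
    {z : E × ℝ} (h0 : O (z.1, 0) = 0) :
    hadamardQuotient O z = ∫ t in (0 : ℝ)..1, fderiv ℝ O (z.1, t * z.2) (0, 1) := by
  rcases eq_or_ne z.2 0 with h | h
  · simp only [hadamardQuotient, h, if_true, mul_zero, intervalIntegral.integral_const, sub_zero,
      one_smul]
    rw [← h]
  · have hline : ∀ r, HasDerivAt (fun r => O (z.1, r)) (fderiv ℝ O (z.1, r) (0, 1)) r := fun r =>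
      (hO.differentiable one_ne_zero _).hasFDerivAt.comp_hasDerivAt r
        ((hasDerivAt_const r z.1).prodMk (hasDerivAt_id r))
    have hcont : Continuous fun r => fderiv ℝ O (z.1, r) (0, 1) :=
      ((hO.continuous_fderiv one_ne_zero).comp (by fun_prop)).clm_apply continuous_const
    rw [hadamardQuotient, if_neg h,
      intervalIntegral.integral_comp_mul_right (fun r => fderiv ℝ O (z.1, r) (0, 1)) h,
      intervalIntegral.integral_eq_sub_of_hasDerivAt (fun r _ => hline r)
        (hcont.intervalIntegrable _ _), zero_mul, one_mul, h0, sub_zero]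

theorem contDiffOn_hadamardQuotient [FiniteDimensional ℝ E] [CompleteSpace V] {D : Set (E × ℝ)}
    (hD : IsOpen D) {O : E × ℝ → V} (hO : ContDiffOn ℝ ∞ O D) (h0 : ∀ z ∈ D, z.2 = 0 → O z = 0) :
    ContDiffOn ℝ ∞ (hadamardQuotient O) D := by
  intro z₀ hz₀
  refine ContDiffAt.contDiffWithinAt ?_
  rcases eq_or_ne z₀.2 0 with hr | hr
  · obtain ⟨ρ, hρ, hρD, O', hO', -, hOO'⟩ :=
      exists_contDiff_hasCompactSupport_eqOn_closedBall hD (n := ⊤) hO hz₀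
    let K : (E × ℝ) × ℝ → V := fun y => fderiv ℝ O' (y.1.1, y.2 * y.1.2) (0, 1)
    have hK : ContDiff ℝ ∞ K := (contDiff_fderiv_apply_const hO' (0, 1)).comp (by fun_prop)
    refine (contDiff_intervalIntegral hK 0 1).contDiffAt.congr_of_eventuallyEq ?_
    filter_upwards [Metric.ball_mem_nhds z₀ hρ] with z hz
    have hfoot : (z.1, (0 : ℝ)) ∈ Metric.closedBall z₀ ρ := by
      rw [Metric.mem_closedBall, Prod.dist_eq, hr, dist_self, max_eq_left dist_nonneg]
      exact (le_max_left _ _).trans (Metric.mem_ball.1 hz).le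
    have heq : O' =ᶠ[𝓝 z] O := hOO'.eventuallyEq_of_mem
      (mem_of_superset (Metric.isOpen_ball.mem_nhds hz) Metric.ball_subset_closedBall)
    calc hadamardQuotient O z = hadamardQuotient O' z := by
          simp only [hadamardQuotient, heq.fderiv_eq, heq.eq_of_nhds]
      _ = _ := hadamardQuotient_eq_integral (hO'.of_le (by simp))
          ((hOO' hfoot).trans (h0 _ (hρD hfoot) rfl))
  · have hdiv : ContDiffAt ℝ ∞ (fun z : E × ℝ => z.2⁻¹ • O z) z₀ :=
      (contDiffAt_snd.inv hr).smul (hO.contDiffAt (hD.mem_nhds hz₀))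
    refine hdiv.congr_of_eventuallyEq ?_
    filter_upwards [continuous_snd.continuousAt.eventually_ne hr] with z hz
    rw [hadamardQuotient, if_neg hz]

end HadamardQuotient

section EvenSmooth

open ContDiff

variable {E V : Type*} [NormedAddCommGroup E] [NormedSpace ℝ E] [NormedAddCommGroup V]
  [NormedSpace ℝ V] {D : Set (E × ℝ)} {G : E × ℝ → V} {z : E × ℝ}

theorem contDiffOn_fderiv_apply_const {D : Set E} {G : E → V} (hD : IsOpen D)
    (hG : ContDiffOn ℝ ∞ G D) (a : E) : ContDiffOn ℝ ∞ (fun y => fderiv ℝ G y a) D :=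
  (hG.fderiv_of_isOpen hD (m := ∞) (by simp)).clm_apply contDiffOn_const

theorem eqOn_of_snd_smul_eq {X : Type*} [TopologicalSpace X] {D : Set (X × ℝ)} (hD : IsOpen D)
    {K₁ K₂ : X × ℝ → V} (h₁ : ContinuousOn K₁ D) (h₂ : ContinuousOn K₂ D)
    (h : ∀ z ∈ D, z.2 • K₁ z = z.2 • K₂ z) : Set.EqOn K₁ K₂ D := by
  have hdense : Dense {z : X × ℝ | z.2 ≠ 0} := (dense_compl_singleton 0).preimage isOpenMap_snd
  refine Set.EqOn.of_subset_closure (s := D ∩ {z | z.2 ≠ 0}) (fun z hz => ?_) h₁ h₂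
    Set.inter_subset_left (hdense.open_subset_closure_inter hD)
  exact smul_right_injective V hz.2 (h z hz.1)

/-- `G` is smooth on `D` and even in the last coordinate there. -/
structure IsEvenSmoothOn (G : E × ℝ → V) (D : Set (E × ℝ)) : Prop where
  contDiffOn : ContDiffOn ℝ ∞ G D
  even : ∀ z ∈ D, G (z.1, -z.2) = G z

/-- The operator `r⁻¹ ∂_r`, where `r` is the last coordinate, extended by `∂_r²` to `r = 0`. -/
noncomputable def radialDeriv (G : E × ℝ → V) : E × ℝ → V :=
  hadamardQuotient fun z => fderiv ℝ G z (0, 1)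

theorem fderiv_snd_smul_apply {K : E × ℝ → V} (hK : DifferentiableAt ℝ K z) (a : E × ℝ) :
    fderiv ℝ (fun y => y.2 • K y) z a = z.2 • fderiv ℝ K z a + a.2 • K z := by
  simp [fderiv_fun_smul differentiableAt_snd hK, fderiv_snd]

theorem fderiv_neg_snd_apply_of_even (hD : IsOpen D) (hG : ∀ z ∈ D, G (z.1, -z.2) = G z)
    (hz : z ∈ D) (a : E × ℝ) : fderiv ℝ G (z.1, -z.2) (a.1, -a.2) = fderiv ℝ G z a := by
  let σ : (E × ℝ) ≃L[ℝ] E × ℝ := (ContinuousLinearEquiv.refl ℝ E).prodCongr (.neg ℝ)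
  have h : G ∘ σ =ᶠ[𝓝 z] G := (Set.EqOn.eventuallyEq_of_mem hG (hD.mem_nhds hz) :)
  rw [← h.fderiv_eq, σ.comp_right_fderiv]
  rfl

theorem fderiv_snd_neg_snd_of_even (hD : IsOpen D) (hG : ∀ z ∈ D, G (z.1, -z.2) = G z)
    (hz : z ∈ D) : fderiv ℝ G (z.1, -z.2) (0, 1) = -fderiv ℝ G z (0, 1) := by
  rw [← fderiv_neg_snd_apply_of_even hD hG hz, ← map_neg]
  simp

theorem eq_zero_of_odd {X : Type*} {O : X × ℝ → V} {z : X × ℝ} (hO : O (z.1, -z.2) = -O z)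
    (h0 : z.2 = 0) : O z = 0 := by
  have : IsAddTorsionFree V := .of_isTorsionFree ℝ V
  rwa [show (z.1, -z.2) = z by ext <;> simp [h0], self_eq_neg] at hO

theorem hadamardQuotient_neg_snd {O : E × ℝ → V} (hO : O (z.1, -z.2) = -O z) :
    hadamardQuotient O (z.1, -z.2) = hadamardQuotient O z := by
  rcases eq_or_ne z.2 0 with h | h
  · rw [show (z.1, -z.2) = z by ext <;> simp [h]]
  · simp [hadamardQuotient, h, hO]

theorem isEvenSmoothOn_hadamardQuotient [FiniteDimensional ℝ E] [CompleteSpace V] (hD : IsOpen D)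
    {O : E × ℝ → V} (hO : ContDiffOn ℝ ∞ O D) (hodd : ∀ z ∈ D, O (z.1, -z.2) = -O z) :
    IsEvenSmoothOn (hadamardQuotient O) D where
  contDiffOn := contDiffOn_hadamardQuotient hD hO fun z hz => eq_zero_of_odd (hodd z hz)
  even z hz := hadamardQuotient_neg_snd (hodd z hz)

namespace IsEvenSmoothOn

protected theorem contDiffAt (hG : IsEvenSmoothOn G D) (hD : IsOpen D) (hz : z ∈ D) :
    ContDiffAt ℝ ∞ G z :=
  hG.contDiffOn.contDiffAt (hD.mem_nhds hz)

protected theorem differentiableAt (hG : IsEvenSmoothOn G D) (hD : IsOpen D) (hz : z ∈ D) :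
    DifferentiableAt ℝ G z :=
  (hG.contDiffAt hD hz).differentiableAt (by simp)

theorem fderiv_apply (hG : IsEvenSmoothOn G D) (hD : IsOpen D) (e : E) :
    IsEvenSmoothOn (fun z => fderiv ℝ G z (e, 0)) D where
  contDiffOn := contDiffOn_fderiv_apply_const hD hG.contDiffOn _
  even z hz := by simpa using fderiv_neg_snd_apply_of_even hD hG.even hz (e, 0)

protected theorem radialDeriv [FiniteDimensional ℝ E] [CompleteSpace V] (hG : IsEvenSmoothOn G D)
    (hD : IsOpen D) : IsEvenSmoothOn (radialDeriv G) D :=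
  isEvenSmoothOn_hadamardQuotient hD (contDiffOn_fderiv_apply_const hD hG.contDiffOn _)
    fun _ hz => fderiv_snd_neg_snd_of_even hD hG.even hz

theorem iterate_radialDeriv [FiniteDimensional ℝ E] [CompleteSpace V] (hG : IsEvenSmoothOn G D)
    (hD : IsOpen D) (k : ℕ) : IsEvenSmoothOn (radialDeriv^[k] G) D := by
  induction k with
  | zero => exact hG
  | succ k ih => simpa only [Function.iterate_succ_apply'] using ih.radialDeriv hD

theorem snd_smul_radialDeriv (hG : IsEvenSmoothOn G D) (hD : IsOpen D) (hz : z ∈ D) :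
    z.2 • radialDeriv G z = fderiv ℝ G z (0, 1) :=
  snd_smul_hadamardQuotient <| eq_zero_of_odd (O := fun z => fderiv ℝ G z (0, 1)) <|
    fderiv_snd_neg_snd_of_even hD hG.even hz

theorem fderiv_fderiv_apply_snd [FiniteDimensional ℝ E] [CompleteSpace V]
    (hG : IsEvenSmoothOn G D) (hD : IsOpen D) (hz : z ∈ D) (e : E) :
    fderiv ℝ (fun y => fderiv ℝ G y (e, 0)) z (0, 1) =
      z.2 • fderiv ℝ (radialDeriv G) z (e, 0) := by
  have hcongr : (fun y => fderiv ℝ G y (0, 1)) =ᶠ[𝓝 z] fun y => y.2 • radialDeriv G y := by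
    filter_upwards [hD.mem_nhds hz] with y hy using (hG.snd_smul_radialDeriv hD hy).symm
  rw [fderiv_fderiv_apply_comm ((hG.contDiffAt hD hz).of_le ENat.LEInfty.out), hcongr.fderiv_eq,
    fderiv_snd_smul_apply ((hG.radialDeriv hD).differentiableAt hD hz), zero_smul, add_zero]

end IsEvenSmoothOn

end EvenSmooth

section VekuaSystem

variable {E V W ι : Type*} [NormedAddCommGroup E] [NormedSpace ℝ E] [NormedAddCommGroup V]
  [NormedSpace ℝ V] [NormedAddCommGroup W] [NormedSpace ℝ W] [Fintype ι] {D : Set (E × ℝ)}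
  {P : ι → W →L[ℝ] V} {Q : ι → V →L[ℝ] W} {e : ι → E} {c : ℝ} {F : E × ℝ → V} {H : E × ℝ → W}

/-- The Vekua type system `∑ i, Q i (∂_{e i} F) = r ∂_r H + c H`,
`∑ i, P i (∂_{e i} H) = -r⁻¹ ∂_r F` for a pair of smooth functions which are even in the last
coordinate `r`. With `c = 1` these are the Cauchy-Riemann equations of the stem function
`(F, r H)`. -/
structure IsVekuaSystem (P : ι → W →L[ℝ] V) (Q : ι → V →L[ℝ] W) (e : ι → E) (c : ℝ)
    (D : Set (E × ℝ)) (F : E × ℝ → V) (H : E × ℝ → W) : Prop where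
  fst : IsEvenSmoothOn F D
  snd : IsEvenSmoothOn H D
  sum_fst : ∀ z ∈ D, diracOp Q (fun i => (e i, 0)) F z = z.2 ^ 2 • radialDeriv H z + c • H z
  sum_snd : ∀ z ∈ D, diracOp P (fun i => (e i, 0)) H z = -radialDeriv F z

theorem IsEvenSmoothOn.snd_smul_diracOp_radialDeriv [FiniteDimensional ℝ E] [CompleteSpace V]
    (hF : IsEvenSmoothOn F D) (hD : IsOpen D) (Q : ι → V →L[ℝ] W) (e : ι → E) {z : E × ℝ}
    (hz : z ∈ D) : z.2 • diracOp Q (fun i => (e i, 0)) (radialDeriv F) z =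
      fderiv ℝ (diracOp Q (fun i => (e i, 0)) F) z (0, 1) := by
  rw [fderiv_diracOp_apply Q fun i => (hF.fderiv_apply hD (e i)).differentiableAt hD hz, diracOp,
    Finset.smul_sum]
  refine Finset.sum_congr rfl fun i _ => ?_
  rw [hF.fderiv_fderiv_apply_snd hD hz, map_smul]

theorem IsEvenSmoothOn.continuousOn_diracOp (hF : IsEvenSmoothOn F D) (hD : IsOpen D)
    (Q : ι → V →L[ℝ] W) (e : ι → E) : ContinuousOn (diracOp Q (fun i => (e i, 0)) F) D :=
  continuousOn_finsetSum _ fun i _ =>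
    (Q i).continuous.comp_continuousOn (hF.fderiv_apply hD (e i)).contDiffOn.continuousOn

namespace IsVekuaSystem

variable [FiniteDimensional ℝ E] [CompleteSpace V] [CompleteSpace W]

protected theorem radialDeriv (h : IsVekuaSystem P Q e c D F H) (hD : IsOpen D) :
    IsVekuaSystem P Q e (c + 2) D (radialDeriv F) (radialDeriv H) := by
  have hF := h.fst.radialDeriv hD
  have hH := h.snd.radialDeriv hD
  have hH' := hH.radialDeriv hD
  refine ⟨hF, hH, eqOn_of_snd_smul_eq hD (hF.continuousOn_diracOp hD Q e) ?_
    fun z hz => ?_, eqOn_of_snd_smul_eq hD (hH.continuousOn_diracOp hD P e) ?_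
    fun z hz => ?_⟩
  · exact ((continuous_snd.pow 2).continuousOn.smul hH'.contDiffOn.continuousOn).add
      (hH.contDiffOn.continuousOn.const_smul _)
  · have hcongr : diracOp Q (fun i => (e i, 0)) F =ᶠ[𝓝 z]
        fun y => y.2 • (y.2 • radialDeriv H y) + c • H y := by
      filter_upwards [hD.mem_nhds hz] with y hy
      rw [h.sum_fst y hy, sq, mul_smul]
    have hHz := hH.differentiableAt hD hz
    have hrH : DifferentiableAt ℝ (fun y => y.2 • radialDeriv H y) z :=
      differentiableAt_snd.fun_smul hHz
    rw [h.fst.snd_smul_diracOp_radialDeriv hD Q e hz, hcongr.fderiv_eq,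
      fderiv_fun_add (differentiableAt_snd.fun_smul hrH)
        ((h.snd.differentiableAt hD hz).fun_const_smul c), add_apply, fderiv_snd_smul_apply hrH,
      fderiv_snd_smul_apply hHz, fderiv_fun_const_smul (h.snd.differentiableAt hD hz), smul_apply,
      ← h.snd.snd_smul_radialDeriv hD hz, ← hH.snd_smul_radialDeriv hD hz]
    module
  · exact (hF.radialDeriv hD).contDiffOn.continuousOn.neg
  · have hcongr : diracOp P (fun i => (e i, 0)) H =ᶠ[𝓝 z]
        fun y => -radialDeriv F y := Set.EqOn.eventuallyEq_of_mem h.sum_snd (hD.mem_nhds hz)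
    rw [h.snd.snd_smul_diracOp_radialDeriv hD P e hz, hcongr.fderiv_eq, fderiv_fun_neg,
      neg_apply, ← hF.snd_smul_radialDeriv hD hz, smul_neg]

theorem iterate_radialDeriv (h : IsVekuaSystem P Q e c D F H) (hD : IsOpen D) (k : ℕ) :
    IsVekuaSystem P Q e (c + 2 * k) D (radialDeriv^[k] F) (radialDeriv^[k] H) := by
  induction k with
  | zero => simpa using h
  | succ k ih =>
    simp only [Function.iterate_succ_apply']
    convert ih.radialDeriv hD using 1
    push_cast
    ring

end IsVekuaSystem

end VekuaSystem

section AxialLift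

open ContDiff
open scoped InnerProductSpace

variable {E V Y : Type*} [NormedAddCommGroup E] [NormedAddCommGroup Y]

/-- The points `(y, w)` with `(y, ‖w‖) ∈ D`: the set swept out by rotating `D` about `E`. -/
def axialDomain (D : Set (E × ℝ)) : Set (E × Y) :=
  {x | (x.1, ‖x.2‖) ∈ D}

/-- The function `(y, w) ↦ G (y, ‖w‖)`. -/
def axialLift (G : E × ℝ → V) (x : E × Y) : V :=
  G (x.1, ‖x.2‖)

theorem isOpen_axialDomain {D : Set (E × ℝ)} (hD : IsOpen D) :
    IsOpen (axialDomain D : Set (E × Y)) :=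
  hD.preimage (by fun_prop)

variable [NormedSpace ℝ E] [InnerProductSpace ℝ Y] [NormedAddCommGroup V] [NormedSpace ℝ V]
  {D : Set (E × ℝ)} {G : E × ℝ → V} {x : E × Y}

theorem hasFDerivAt_norm_of_ne_zero {w : Y} (hw : w ≠ 0) :
    HasFDerivAt (fun w : Y => ‖w‖) (‖w‖⁻¹ • innerSL ℝ w) w := by
  have h := (hasStrictFDerivAt_norm_sq w).hasFDerivAt.sqrt (by positivity)
  simp only [Real.sqrt_sq (norm_nonneg _)] at h
  convert h using 1
  ext
  simp only [smul_apply, coe_innerSL_apply, smul_eq_mul, one_div, mul_inv_rev, nsmul_eq_mul,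
    Nat.cast_ofNat]
  field_simp

/-- On the axis `w = 0`, where `w ↦ ‖w‖` is not differentiable, the derivative exists because the
one of an even function vanishes there in the direction `r`. -/
theorem IsEvenSmoothOn.hasFDerivAt_axialLift (hG : IsEvenSmoothOn G D) (hD : IsOpen D)
    (hx : x ∈ axialDomain D) :
    HasFDerivAt (axialLift G)
      ((fderiv ℝ G (x.1, ‖x.2‖)).comp
          ((ContinuousLinearMap.inl ℝ E ℝ).comp (ContinuousLinearMap.fst ℝ E Y)) +
        ((innerSL ℝ x.2).comp (ContinuousLinearMap.snd ℝ E Y)).smulRight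
          (axialLift (radialDeriv G) x)) x := by
  have hGx := (hG.differentiableAt hD hx).hasFDerivAt
  have hr := hG.snd_smul_radialDeriv hD hx
  have hsplit (y : E) (t : ℝ) : fderiv ℝ G (x.1, ‖x.2‖) (y, t) =
      fderiv ℝ G (x.1, ‖x.2‖) (y, 0) + t • fderiv ℝ G (x.1, ‖x.2‖) (0, 1) := by
    rw [← map_smul, ← map_add, Prod.smul_mk, smul_zero, smul_eq_mul, mul_one, Prod.mk_add_mk,
      add_zero, zero_add]
  rcases eq_or_ne x.2 0 with hw | hw
  · have hκ : Tendsto (fun x' : E × Y => (x'.1, ‖x'.2‖)) (𝓝 x) (𝓝 (x.1, ‖x.2‖)) :=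
      Continuous.tendsto (by fun_prop) x
    have hlittleO := (hasFDerivAt_iff_isLittleO.1 hGx).comp_tendsto hκ
    refine .of_isLittleO ((hlittleO.congr_left fun x' => ?_).trans_isBigO
      (Asymptotics.isBigO_of_le _ fun x' => ?_))
    · rw [hw, norm_zero, zero_smul] at hr
      simp only [hw, norm_zero, ← hr, smul_zero, add_zero] at hsplit
      simp [axialLift, hw, hsplit _ ‖_‖, -map_sub]
    · simp [hw, Prod.norm_def]
  · have h := hGx.comp x (hasFDerivAt_fst.prodMk ((hasFDerivAt_norm_of_ne_zero hw).comp x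
      hasFDerivAt_snd))
    refine h.congr_fderiv (ContinuousLinearMap.ext fun a => ?_)
    simp only [ContinuousLinearMap.smul_comp, ContinuousLinearMap.comp_apply,
      ContinuousLinearMap.prod_apply, ContinuousLinearMap.coe_fst', ContinuousLinearMap.coe_snd',
      smul_apply, coe_innerSL_apply, smul_eq_mul, hsplit _ (_ * _), ← hr, smul_smul, axialLift,
      add_apply, ContinuousLinearMap.inl_apply, ContinuousLinearMap.smulRight_apply, add_right_inj]
    congr 1
    field_simp

theorem IsEvenSmoothOn.fderiv_axialLift_apply (hG : IsEvenSmoothOn G D) (hD : IsOpen D)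
    (hx : x ∈ axialDomain D) (a : E × Y) :
    fderiv ℝ (axialLift G) x a = axialLift (fun z => fderiv ℝ G z (a.1, 0)) x +
      ⟪x.2, a.2⟫_ℝ • axialLift (radialDeriv G) x := by
  rw [(hG.hasFDerivAt_axialLift hD hx).fderiv]
  rfl

theorem IsEvenSmoothOn.contDiffOn_axialLift [FiniteDimensional ℝ E] [FiniteDimensional ℝ Y]
    [CompleteSpace V] (hG : IsEvenSmoothOn G D) (hD : IsOpen D) :
    ContDiffOn ℝ ∞ (axialLift G) (axialDomain D : Set (E × Y)) := by
  have hU : IsOpen (axialDomain D : Set (E × Y)) := isOpen_axialDomain hD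
  rw [contDiffOn_infty]
  intro n
  induction n generalizing G with
  | zero =>
    exact contDiffOn_zero.2 (hG.contDiffOn.continuousOn.comp (by fun_prop) fun _ hx => hx)
  | succ n ih =>
    rw [Nat.cast_add, Nat.cast_one]
    refine (contDiffOn_succ_iff_fderiv_apply hU.uniqueDiffOn).2
      ⟨fun x hx => (hG.hasFDerivAt_axialLift hD hx).differentiableAt.differentiableWithinAt,
        by simp, fun a => ?_⟩
    have hinner : ContDiff ℝ n fun x : E × Y => ⟪x.2, a.2⟫_ℝ := contDiff_snd.inner ℝ contDiff_const
    refine ((ih (hG.fderiv_apply hD a.1)).add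
      (hinner.contDiffOn.smul (ih (hG.radialDeriv hD)))).congr fun x hx => ?_
    rw [fderivWithin_of_isOpen hU hx, hG.fderiv_axialLift_apply hD hx a]
    rfl

end AxialLift

section AxialDirac

open ContDiff

section Operators

variable {E V W ι : Type*} [NormedAddCommGroup E] [NormedSpace ℝ E] [NormedAddCommGroup V]
  [NormedSpace ℝ V] [NormedAddCommGroup W] [NormedSpace ℝ W] [Fintype ι] (a : ι → E)
  {g g' : E → V} {x : E}

theorem diracOp_congr (Q : ι → V →L[ℝ] W) (h : g =ᶠ[𝓝 x] g') :
    diracOp Q a g x = diracOp Q a g' x := by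
  simp only [diracOp, h.fderiv_eq]

theorem laplacianOp_congr (h : g =ᶠ[𝓝 x] g') : laplacianOp a g x = laplacianOp a g' x := by
  refine Finset.sum_congr rfl fun i _ => ?_
  have hi : (fun y => fderiv ℝ g y (a i)) =ᶠ[𝓝 x] fun y => fderiv ℝ g' y (a i) :=
    h.fderiv.fun_comp (· (a i))
  rw [hi.fderiv_eq]

theorem diracOp_const_smul (Q : ι → V →L[ℝ] W) (c : ℝ) (g : E → V) :
    diracOp Q a (c • g) x = c • diracOp Q a g x := by
  simp only [diracOp, fderiv_const_smul_field, Pi.smul_apply, smul_apply, map_smul, Finset.smul_sum]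

theorem laplacianOp_const_smul (c : ℝ) (g : E → V) :
    laplacianOp a (c • g) x = c • laplacianOp a g x := by
  have hderiv (i : ι) : (fun y => fderiv ℝ (c • g) y (a i)) = c • fun y => fderiv ℝ g y (a i) :=
    funext fun y => by rw [fderiv_const_smul_field]; rfl
  simp only [laplacianOp, hderiv, Finset.smul_sum]
  exact Finset.sum_congr rfl fun i _ => by rw [fderiv_const_smul_field]; rfl

end Operators

section RadialMul

variable {V τ : Type*} [NormedAddCommGroup V] [NormedSpace ℝ V] [Fintype τ] (K : τ → V →L[ℝ] V)

/-- The multiplication `(w, a) ↦ ∑ t, w t • K t a` by the vector variable `w`. -/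
noncomputable def radialMul : EuclideanSpace ℝ τ →L[ℝ] V →L[ℝ] V :=
  ∑ t, (EuclideanSpace.proj t : EuclideanSpace ℝ τ →L[ℝ] ℝ).smulRight (K t)

theorem radialMul_apply (w : EuclideanSpace ℝ τ) (a : V) :
    radialMul K w a = ∑ t, w t • K t a := by
  simp [radialMul, sum_apply]

@[simp]
theorem radialMul_single [DecidableEq τ] (t : τ) (a : V) :
    radialMul K (EuclideanSpace.single t 1) a = K t a := by
  simp [radialMul_apply]

end RadialMul

variable {E V ι τ : Type*} [NormedAddCommGroup E] [NormedSpace ℝ E] [NormedAddCommGroup V]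
  [NormedSpace ℝ V]

/-- The data of a generalized Cauchy-Riemann operator `∑ i, Q i ∂_{y i} + ∑ t, K t ∂_{w t}` and of
its conjugate `∑ i, P i ∂_{y i} - ∑ t, K t ∂_{w t}`, whose products in both orders are the
Laplacian. -/
structure IsAxialCliffordPair [DecidableEq ι] [DecidableEq τ] (P Q : ι → V →L[ℝ] V)
    (K : τ → V →L[ℝ] V) : Prop where
  left : IsCliffordPair (Sum.elim P (-K)) (Sum.elim Q K)
  right : IsCliffordPair (Sum.elim Q K) (Sum.elim P (-K))

namespace IsAxialCliffordPair

variable [DecidableEq ι] [DecidableEq τ] {P Q : ι → V →L[ℝ] V} {K : τ → V →L[ℝ] V}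

theorem apply_apply_self (h : IsAxialCliffordPair P Q K) (t : τ) (a : V) : K t (K t a) = -a := by
  have hsq := h.left (.inr t) (.inr t) a
  simp only [Sum.elim_inr, Pi.neg_apply, neg_apply, if_true, ← two_smul ℝ] at hsq
  exact neg_eq_iff_eq_neg.1 (smul_right_injective V two_ne_zero hsq)

variable [Fintype τ]

theorem radialMul_radialMul (h : IsAxialCliffordPair P Q K) (w : EuclideanSpace ℝ τ) (a : V) :
    radialMul K w (radialMul K w a) = -(‖w‖ ^ 2 • a) := by
  have hK : IsCliffordPair (-K) K := fun s t b => by simpa using h.left (.inr s) (.inr t) b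
  have hsq := hK.sum_apply_sum_apply (M := fun s t => (w s * w t) • a) fun s t => by rw [mul_comm]
  rw [EuclideanSpace.real_norm_sq_eq, Finset.sum_smul, ← neg_eq_iff_eq_neg, radialMul_apply]
  simpa [radialMul_apply, Finset.smul_sum, smul_smul, sq, mul_comm] using hsq

theorem apply_radialMul (h : IsAxialCliffordPair P Q K) (i : ι) (w : EuclideanSpace ℝ τ) (a : V) :
    Q i (radialMul K w a) = radialMul K w (P i a) := by
  have hK (t : τ) : Q i (K t a) = K t (P i a) := by
    simpa [neg_add_eq_zero] using h.right (.inl i) (.inr t) a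
  simp only [radialMul_apply, map_sum, map_smul, hK]

end IsAxialCliffordPair

variable [Fintype τ]

/-- The directions of the coordinates `y i` and `w t` of a point `(y, w)`. -/
noncomputable def axialDir [DecidableEq τ] (e : ι → E) : ι ⊕ τ → E × EuclideanSpace ℝ τ :=
  Sum.elim (fun i => (e i, 0)) fun t => (0, EuclideanSpace.single t 1)

/-- The function `(y, w) ↦ F (y, ‖w‖) + w * H (y, ‖w‖)`, where `w *` is multiplication by the vector
`∑ t, w t • K t`. -/
noncomputable def axialFunction (K : τ → V →L[ℝ] V) (F H : E × ℝ → V)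
    (x : E × EuclideanSpace ℝ τ) : V :=
  axialLift F x + radialMul K x.2 (axialLift H x)

variable {D : Set (E × ℝ)} {F H : E × ℝ → V} {P Q : ι → V →L[ℝ] V} {K : τ → V →L[ℝ] V} {e : ι → E}
  {c : ℝ} {x : E × EuclideanSpace ℝ τ} {g : E × EuclideanSpace ℝ τ → V}

theorem IsEvenSmoothOn.fderiv_axialFunction_apply (hF : IsEvenSmoothOn F D)
    (hH : IsEvenSmoothOn H D) (hD : IsOpen D) (hx : x ∈ axialDomain D)
    (a : E × EuclideanSpace ℝ τ) :
    fderiv ℝ (axialFunction K F H) x a = fderiv ℝ (axialLift F) x a +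
      radialMul K x.2 (fderiv ℝ (axialLift H) x a) + radialMul K a.2 (axialLift H x) := by
  have hF' := (hF.hasFDerivAt_axialLift hD hx).differentiableAt.hasFDerivAt
  have hH' := (hH.hasFDerivAt_axialLift hD hx).differentiableAt.hasFDerivAt
  have h := hF'.add ((((radialMul K).comp (.snd ℝ E _)).hasFDerivAt (x := x)).clm_apply hH')
  refine (DFunLike.congr_fun h.fderiv a).trans ?_
  simp [add_assoc]

theorem IsEvenSmoothOn.contDiffOn_axialFunction [FiniteDimensional ℝ E] [CompleteSpace V]
    (hF : IsEvenSmoothOn F D) (hH : IsEvenSmoothOn H D) (hD : IsOpen D) :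
    ContDiffOn ℝ ∞ (axialFunction K F H) (axialDomain D) :=
  (hF.contDiffOn_axialLift hD).add
    (((radialMul K).contDiff.comp contDiff_snd).contDiffOn.clm_apply (hH.contDiffOn_axialLift hD))

theorem IsEvenSmoothOn.fderiv_axialLift_inl (hF : IsEvenSmoothOn F D) (hD : IsOpen D)
    (hx : x ∈ axialDomain D) (a : E) :
    fderiv ℝ (axialLift F) x (a, 0) = axialLift (fun z => fderiv ℝ F z (a, 0)) x := by
  rw [hF.fderiv_axialLift_apply hD hx, inner_zero_right, zero_smul, add_zero]

theorem IsEvenSmoothOn.fderiv_axialLift_single [DecidableEq τ] (hF : IsEvenSmoothOn F D)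
    (hD : IsOpen D) (hx : x ∈ axialDomain D) (t : τ) :
    fderiv ℝ (axialLift F) x (0, EuclideanSpace.single t 1) =
      x.2 t • axialLift (radialDeriv F) x := by
  simp [hF.fderiv_axialLift_apply hD hx, axialLift, EuclideanSpace.inner_single_right,
    Prod.mk_zero_zero]

variable [Fintype ι] [DecidableEq τ]

theorem IsEvenSmoothOn.diracOp_axialLift (hF : IsEvenSmoothOn F D) (hD : IsOpen D)
    (hx : x ∈ axialDomain D) : diracOp (Sum.elim Q K) (axialDir e) (axialLift F) x =
      axialLift (diracOp Q (fun i => (e i, 0)) F) x +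
        radialMul K x.2 (axialLift (radialDeriv F) x) := by
  simp only [diracOp, axialDir, Fintype.sum_sum_type, Sum.elim_inl, Sum.elim_inr,
    hF.fderiv_axialLift_inl hD hx, hF.fderiv_axialLift_single hD hx, map_smul, radialMul_apply]
  rfl

namespace IsVekuaSystem

variable [DecidableEq ι]

theorem diracOp_axialFunction (h : IsVekuaSystem P Q e c D F H) (hC : IsAxialCliffordPair P Q K)
    (hD : IsOpen D) (hx : x ∈ axialDomain D) :
    diracOp (Sum.elim Q K) (axialDir e) (axialFunction K F H) x =
      (c - Fintype.card τ) • axialLift H x := by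
  have hsplit : diracOp (Sum.elim Q K) (axialDir e) (axialFunction K F H) x =
      diracOp (Sum.elim Q K) (axialDir e) (axialLift F) x +
        (∑ i, Q i (radialMul K x.2 (fderiv ℝ (axialLift H) x (e i, 0))) +
          ∑ t, K t (radialMul K x.2 (fderiv ℝ (axialLift H) x (0, EuclideanSpace.single t 1)))) +
        ∑ t, K t (K t (axialLift H x)) := by
    simp only [diracOp, axialDir, Fintype.sum_sum_type, Sum.elim_inl, Sum.elim_inr,
      h.fst.fderiv_axialFunction_apply h.snd hD hx, map_add, map_zero, zero_apply,
      radialMul_single, Finset.sum_add_distrib, Finset.sum_const_zero, zero_add]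
  have hrow : ∑ i, Q i (radialMul K x.2 (fderiv ℝ (axialLift H) x (e i, 0))) +
      ∑ t, K t (radialMul K x.2 (fderiv ℝ (axialLift H) x (0, EuclideanSpace.single t 1))) =
      radialMul K x.2 (axialLift (diracOp P (fun i => (e i, 0)) H) x) -
        ‖x.2‖ ^ 2 • axialLift (radialDeriv H) x := by
    simp only [sub_eq_add_neg, ← hC.radialMul_radialMul, hC.apply_radialMul,
      h.snd.fderiv_axialLift_inl hD hx, h.snd.fderiv_axialLift_single hD hx, map_smul, ← map_sum,
      ← radialMul_apply]
    rfl
  have hdiag : ∑ t, K t (K t (axialLift H x)) = -((Fintype.card τ : ℝ) • axialLift H x) := by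
    simp only [hC.apply_apply_self, Finset.sum_neg_distrib, Finset.sum_const, Finset.card_univ,
      Nat.cast_smul_eq_nsmul]
  rw [hsplit, hrow, hdiag, h.fst.diracOp_axialLift hD hx]
  simp only [axialLift, h.sum_fst _ hx, h.sum_snd _ hx, map_neg]
  module

variable [FiniteDimensional ℝ E] [CompleteSpace V]

theorem laplacianOp_axialFunction (h : IsVekuaSystem P Q e c D F H)
    (hC : IsAxialCliffordPair P Q K) (hD : IsOpen D) (hx : x ∈ axialDomain D) :
    laplacianOp (axialDir e) (axialFunction K F H) x =
      (Fintype.card τ - c) • axialFunction K (radialDeriv F) (radialDeriv H) x := by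
  have hU : axialDomain D ∈ 𝓝 x := (isOpen_axialDomain hD).mem_nhds hx
  have hdirac : diracOp (Sum.elim Q K) (axialDir e) (axialFunction K F H) =ᶠ[𝓝 x]
      (c - Fintype.card τ) • axialLift H :=
    Set.EqOn.eventuallyEq_of_mem (fun _ hy => h.diracOp_axialFunction hC hD hy) hU
  have hneg (w : EuclideanSpace ℝ τ) (a : V) : radialMul (-K) w a = -radialMul K w a := by
    simp [radialMul_apply]
  rw [← hC.left.diracOp_diracOp (axialDir e) (((h.fst.contDiffOn_axialFunction h.snd hD).contDiffAt
    hU).of_le ENat.LEInfty.out), diracOp_congr _ _ hdirac, diracOp_const_smul,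
    h.snd.diracOp_axialLift hD hx, hneg, axialFunction]
  simp only [axialLift, h.sum_snd _ hx]
  module

theorem eqOn_iterate_laplacianOp (h : IsVekuaSystem P Q e c D F H)
    (hC : IsAxialCliffordPair P Q K) (hD : IsOpen D)
    (hg : Set.EqOn g (axialFunction K F H) (axialDomain D)) (k : ℕ) :
    Set.EqOn ((laplacianOp (axialDir e))^[k] g)
      ((∏ i ∈ Finset.range k, (Fintype.card τ - (c + 2 * i))) •
        axialFunction K (radialDeriv^[k] F) (radialDeriv^[k] H)) (axialDomain D) := by
  induction k with
  | zero => simpa using hg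
  | succ k ih =>
    intro x hx
    have hU : axialDomain D ∈ 𝓝 x := (isOpen_axialDomain hD).mem_nhds hx
    rw [Function.iterate_succ_apply', laplacianOp_congr _ (ih.eventuallyEq_of_mem hU),
      laplacianOp_const_smul, (h.iterate_radialDeriv hD k).laplacianOp_axialFunction hC hD hx,
      smul_smul, Finset.prod_range_succ, Function.iterate_succ_apply',
      Function.iterate_succ_apply', Pi.smul_apply]

theorem diracOp_iterate_laplacianOp (h : IsVekuaSystem P Q e c D F H)
    (hC : IsAxialCliffordPair P Q K) (hD : IsOpen D)
    (hg : Set.EqOn g (axialFunction K F H) (axialDomain D)) (k : ℕ) (hx : x ∈ axialDomain D) :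
    diracOp (Sum.elim Q K) (axialDir e) ((laplacianOp (axialDir e))^[k] g) x =
      -(∏ i ∈ Finset.range (k + 1), (Fintype.card τ - (c + 2 * i))) •
        axialLift (radialDeriv^[k] H) x := by
  have hU : axialDomain D ∈ 𝓝 x := (isOpen_axialDomain hD).mem_nhds hx
  rw [diracOp_congr _ _ ((h.eqOn_iterate_laplacianOp hC hD hg k).eventuallyEq_of_mem hU),
    diracOp_const_smul, (h.iterate_radialDeriv hD k).diracOp_axialFunction hC hD hx, smul_smul,
    Finset.prod_range_succ, neg_mul_eq_mul_neg, neg_sub]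

end IsVekuaSystem

end AxialDirac

section StemFunction

open ContDiff

variable {E V W ι : Type*} [NormedAddCommGroup E] [NormedSpace ℝ E] [NormedAddCommGroup V]
  [NormedSpace ℝ V] [NormedAddCommGroup W] [NormedSpace ℝ W]

theorem IsCliffordPair.sumElim_prodMap [DecidableEq ι] {P : ι → W →L[ℝ] V} {Q : ι → V →L[ℝ] W}
    (hPQ : IsCliffordPair P Q) (hQP : IsCliffordPair Q P) :
    IsCliffordPair
      (Sum.elim (fun i => (P i).prodMap (Q i))
        fun _ : Unit => (ContinuousLinearMap.snd ℝ W V).prod (-ContinuousLinearMap.fst ℝ W V))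
      (Sum.elim (fun i => (Q i).prodMap (P i))
        fun _ : Unit => (-ContinuousLinearMap.snd ℝ V W).prod (ContinuousLinearMap.fst ℝ V W)) := by
  rintro (i | _) (j | _) a
  · simpa [apply_ite Prod.fst, apply_ite Prod.snd, Prod.ext_iff] using
      And.intro (hPQ i j a.1) (hQP i j a.2)
  all_goals ext <;> simp [two_smul]

variable [Fintype ι] {D : Set (E × ℝ)} {P : ι → W →L[ℝ] V} {Q : ι → V →L[ℝ] W} {e : ι → E}
  {F₁ : E × ℝ → V} {F₂ : E × ℝ → W}

/-- The generalized Cauchy-Riemann system `∑ i, Q i (∂_{e i} F₁) = ∂_r F₂`,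
`∑ i, P i (∂_{e i} F₂) = -∂_r F₁` for a `C¹` pair which is even, respectively odd, in the last
coordinate `r`. -/
structure IsStemSystem (P : ι → W →L[ℝ] V) (Q : ι → V →L[ℝ] W) (e : ι → E) (D : Set (E × ℝ))
    (F₁ : E × ℝ → V) (F₂ : E × ℝ → W) : Prop where
  contDiffOn_fst : ContDiffOn ℝ 1 F₁ D
  contDiffOn_snd : ContDiffOn ℝ 1 F₂ D
  even : ∀ z ∈ D, F₁ (z.1, -z.2) = F₁ z
  odd : ∀ z ∈ D, F₂ (z.1, -z.2) = -F₂ z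
  sum_fst : ∀ z ∈ D, diracOp Q (fun i => (e i, 0)) F₁ z = fderiv ℝ F₂ z (0, 1)
  sum_snd : ∀ z ∈ D, diracOp P (fun i => (e i, 0)) F₂ z = -fderiv ℝ F₁ z (0, 1)

namespace IsStemSystem

protected theorem snd_smul_hadamardQuotient (h : IsStemSystem P Q e D F₁ F₂) {z : E × ℝ}
    (hz : z ∈ D) : z.2 • hadamardQuotient F₂ z = F₂ z :=
  snd_smul_hadamardQuotient (eq_zero_of_odd (h.odd z hz))

variable [FiniteDimensional ℝ E] [CompleteSpace V] [CompleteSpace W] [DecidableEq ι]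

theorem contDiffOn_prodMk (b : Module.Basis ι ℝ E) (h : IsStemSystem P Q b D F₁ F₂)
    (hPQ : IsCliffordPair P Q) (hQP : IsCliffordPair Q P) (hD : IsOpen D) :
    ContDiffOn ℝ ∞ (fun z => (F₁ z, F₂ z)) D := by
  refine contDiffOn_of_diracOp_eq_zero (b.prod (Module.Basis.singleton Unit ℝ))
    (hPQ.sumElim_prodMap hQP) hD (h.contDiffOn_fst.prodMk h.contDiffOn_snd) fun z hz => ?_
  have hF₁ := (h.contDiffOn_fst.contDiffAt (hD.mem_nhds hz)).differentiableAt one_ne_zero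
  have hF₂ := (h.contDiffOn_snd.contDiffAt (hD.mem_nhds hz)).differentiableAt one_ne_zero
  have h₁ := h.sum_fst z hz
  have h₂ := h.sum_snd z hz
  simp only [diracOp] at h₁ h₂
  ext <;> simp [diracOp, hF₁.fderiv_prodMk hF₂, h₁, h₂, Prod.fst_sum, Prod.snd_sum]

theorem isVekuaSystem (b : Module.Basis ι ℝ E) (h : IsStemSystem P Q b D F₁ F₂)
    (hPQ : IsCliffordPair P Q) (hQP : IsCliffordPair Q P) (hD : IsOpen D) :
    IsVekuaSystem P Q b 1 D F₁ (hadamardQuotient F₂) := by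
  have hsmooth := h.contDiffOn_prodMk b hPQ hQP hD
  have hF : IsEvenSmoothOn F₁ D := ⟨hsmooth.fst, h.even⟩
  have hH := isEvenSmoothOn_hadamardQuotient hD hsmooth.snd h.odd
  have hfderiv {z : E × ℝ} (hz : z ∈ D) (a : E × ℝ) : fderiv ℝ F₂ z a =
      z.2 • fderiv ℝ (hadamardQuotient F₂) z a + a.2 • hadamardQuotient F₂ z := by
    have hcongr : F₂ =ᶠ[𝓝 z] fun y => y.2 • hadamardQuotient F₂ y := by
      filter_upwards [hD.mem_nhds hz] with y hy using (h.snd_smul_hadamardQuotient hy).symm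
    rw [hcongr.fderiv_eq, fderiv_snd_smul_apply (hH.differentiableAt hD hz)]
  refine ⟨hF, hH, fun z hz => ?_, eqOn_of_snd_smul_eq hD (hH.continuousOn_diracOp hD P b)
    (hF.radialDeriv hD).contDiffOn.continuousOn.neg fun z hz => ?_⟩
  · rw [h.sum_fst z hz, hfderiv hz, ← hH.snd_smul_radialDeriv hD hz, smul_smul, sq]
  · rw [smul_neg, hF.snd_smul_radialDeriv hD hz, ← h.sum_snd z hz]
    simp [diracOp, hfderiv hz, Finset.smul_sum]

end IsStemSystem

section T2

variable {p : ℕ} {D : Set ((Fin (p + 1) → ℝ) × ℝ)} {G K : (Fin (p + 1) → ℝ) × ℝ → V}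

theorem IsEvenSmoothOn.eqOn_T2 [CompleteSpace V] (hK : IsEvenSmoothOn K D) (hD : IsOpen D)
    (hG : Set.EqOn G (fun z => z.2 • K z) D) :
    Set.EqOn (T2 p G) (fun z => z.2 • radialDeriv K z) D := by
  intro z hz
  have hKz := hK.differentiableAt hD hz
  simp only [T2, hK.snd_smul_radialDeriv hD hz]
  split_ifs with h
  · have hderiv : pdSr p G =ᶠ[𝓝 z] fun y => y.2 • fderiv ℝ K y (0, 1) + K y := by
      filter_upwards [hD.mem_nhds hz] with y hy
      rw [pdSr, (hG.eventuallyEq_of_mem (hD.mem_nhds hy)).fderiv_eq,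
        fderiv_snd_smul_apply (hK.differentiableAt hD hy), one_smul]
    have hK' : DifferentiableAt ℝ (fun y => fderiv ℝ K y (0, 1)) z :=
      ((contDiffOn_fderiv_apply_const hD hK.contDiffOn (0, 1)).contDiffAt
        (hD.mem_nhds hz)).differentiableAt (by simp)
    rw [pdSr2, pdSr, hderiv.fderiv_eq, fderiv_fun_add (by fun_prop) hKz, add_apply,
      fderiv_snd_smul_apply hK', h]
    simp only [zero_smul, one_smul, zero_add]
    module
  · have hmem : ∀ᶠ t in 𝓝 z.2, (z.1, t) ∈ D ∧ t ≠ 0 :=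
      ((Continuous.prodMk_right z.1).continuousAt.eventually (hD.mem_nhds hz)).and
        (isOpen_ne.mem_nhds h)
    have hquot : (fun t : ℝ => t⁻¹ • G (z.1, t)) =ᶠ[𝓝 z.2] fun t => K (z.1, t) := by
      filter_upwards [hmem] with t ht
      rw [hG ht.1, inv_smul_smul₀ ht.2]
    have hderiv : HasFDerivAt (fun t => K (z.1, t)) _ z.2 :=
      hKz.hasFDerivAt.comp (f := fun t : ℝ => (z.1, t)) z.2 (hasFDerivAt_prodMk_right z.1 z.2)
    simp [hquot.fderiv_eq, hderiv.fderiv]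

theorem IsEvenSmoothOn.eqOn_iterate_T2 [CompleteSpace V] (hK : IsEvenSmoothOn K D) (hD : IsOpen D)
    (hG : Set.EqOn G (fun z => z.2 • K z) D) (k : ℕ) :
    Set.EqOn ((T2 p)^[k] G) (fun z => z.2 • radialDeriv^[k] K z) D := by
  induction k with
  | zero => exact hG
  | succ k ih =>
    simp only [Function.iterate_succ_apply']
    exact (hK.iterate_radialDeriv hD k).eqOn_T2 hD ih

end T2

theorem T1_eq_radialDeriv (p : ℕ) : T1 p = radialDeriv (V := V) := by
  rfl

end StemFunction

section ChangeOfVariables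

variable {E E' V W ι κ : Type*} [NormedAddCommGroup E] [NormedSpace ℝ E] [NormedAddCommGroup E']
  [NormedSpace ℝ E'] [NormedAddCommGroup V] [NormedSpace ℝ V] [NormedAddCommGroup W]
  [NormedSpace ℝ W] [Fintype ι] [Fintype κ]

theorem diracOp_comp_continuousLinearEquiv (L : E ≃L[ℝ] E') (Q : ι → V →L[ℝ] W) (a : ι → E)
    (g : E' → V) : diracOp Q a (g ∘ L) = diracOp Q (L ∘ a) g ∘ L := by
  ext x
  simp [diracOp, L.comp_right_fderiv]

theorem laplacianOp_comp_continuousLinearEquiv (L : E ≃L[ℝ] E') (a : ι → E) (g : E' → V) :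
    laplacianOp a (g ∘ L) = laplacianOp (L ∘ a) g ∘ L := by
  have hderiv (i : ι) : (fun y => fderiv ℝ (g ∘ L) y (a i)) =
      (fun y => fderiv ℝ g y (L (a i))) ∘ L := by
    ext y
    simp [L.comp_right_fderiv]
  ext x
  refine Finset.sum_congr rfl fun i _ => ?_
  rw [hderiv, L.comp_right_fderiv]
  rfl

theorem diracOp_comp_equiv (σ : κ ≃ ι) (Q : ι → V →L[ℝ] W) (a : ι → E) :
    diracOp (Q ∘ σ) (a ∘ σ) = diracOp Q a := by
  ext g x
  exact σ.sum_comp fun i => Q i (fderiv ℝ g x (a i))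

theorem laplacianOp_comp_equiv (σ : κ ≃ ι) (a : ι → E) :
    laplacianOp (V := V) (a ∘ σ) = laplacianOp a := by
  ext g x
  exact σ.sum_comp fun i => fderiv ℝ (fun y => fderiv ℝ g y (a i)) x (a i)

end ChangeOfVariables

section CoordinateSplitting

variable {m p : ℕ} (hp : p ≤ m)

/-- The splitting of the indices `0, …, m` into `0, …, p` and `p + 1, …, m`. -/
def splitIndex : Fin (p + 1) ⊕ Fin (m - p) ≃ Fin (m + 1) :=
  finSumFinEquiv.trans (finCongr (by omega))

@[simp]
theorem val_splitIndex_inl (i : Fin (p + 1)) : (splitIndex hp (.inl i) : ℕ) = i := by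
  simp [splitIndex]

@[simp]
theorem not_splitIndex_inr_le (t : Fin (m - p)) : ¬ (splitIndex hp (.inr t) : ℕ) ≤ p := by
  simp [splitIndex, Nat.lt_add_right]

/-- The identification `x ↦ (x_p, x_q)` of `ℝ^{m+1}` with `ℝ^{p+1} × ℝ^q`, where `q = m - p`. -/
noncomputable def splitCoord :
    (Fin (m + 1) → ℝ) ≃L[ℝ] (Fin (p + 1) → ℝ) × EuclideanSpace ℝ (Fin (m - p)) :=
  (((LinearEquiv.funCongrLeft ℝ ℝ (splitIndex hp)).trans
    (LinearEquiv.sumArrowLequivProdArrow _ _ ℝ ℝ)).trans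
    ((LinearEquiv.refl ℝ _).prodCongr (WithLp.linearEquiv 2 ℝ _).symm)).toContinuousLinearEquiv

@[simp]
theorem splitCoord_fst_apply (x : Fin (m + 1) → ℝ) (i : Fin (p + 1)) :
    (splitCoord hp x).1 i = x (splitIndex hp (.inl i)) :=
  rfl

@[simp]
theorem splitCoord_snd_apply (x : Fin (m + 1) → ℝ) (t : Fin (m - p)) :
    (splitCoord hp x).2 t = x (splitIndex hp (.inr t)) :=
  rfl

theorem splitCoord_comp_single :
    splitCoord hp ∘ (fun s => Pi.single s 1) =
      axialDir (Pi.basisFun ℝ (Fin (p + 1))) ∘ (splitIndex hp).symm := by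
  rw [Equiv.eq_comp_symm]
  ext (i | t) <;> simp [axialDir, Pi.single_apply]

theorem fst_splitCoord (x : Fin (m + 1) → ℝ) : (splitCoord hp x).1 = projP m p x := by
  ext i
  simp only [splitCoord_fst_apply, projP, dif_pos (show (i : ℕ) < m + 1 by omega)]
  congr 1

theorem splitCoord_injP (y : Fin (p + 1) → ℝ) : splitCoord hp (injP m p y) = (y, 0) := by
  ext <;> simp [injP, Fin.is_le]

theorem splitCoord_xqpart (x : Fin (m + 1) → ℝ) :
    splitCoord hp (xqpart m p x) = (0, (splitCoord hp x).2) := by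
  ext <;> simp [xqpart, Fin.is_le]

theorem norm_snd_splitCoord (x : Fin (m + 1) → ℝ) : ‖(splitCoord hp x).2‖ = rad m p x := by
  rw [EuclideanSpace.norm_eq, rad, ← (splitIndex hp).sum_comp, Fintype.sum_sum_type]
  simp [xqpart, Fin.is_le]

theorem splitCoord_pt (w : Fin (m + 1) → ℝ) (y : Fin (p + 1) → ℝ) (r : ℝ) :
    splitCoord hp (pt m p w y r) = (y, 0) + r • splitCoord hp w := by
  rw [pt, map_add, map_smul, splitCoord_injP]

theorem axialLift_splitCoord {V : Type*} (G : (Fin (p + 1) → ℝ) × ℝ → V) (x : Fin (m + 1) → ℝ) :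
    axialLift G (splitCoord hp x) = G (projP m p x, rad m p x) := by
  rw [axialLift, fst_splitCoord, norm_snd_splitCoord]

theorem splitCoord_mem_axialDomain_iff {D : Set ((Fin (p + 1) → ℝ) × ℝ)} {x : Fin (m + 1) → ℝ} :
    splitCoord hp x ∈ axialDomain D ↔ (projP m p x, rad m p x) ∈ D := by
  rw [axialDomain, Set.mem_ofPred_eq, fst_splitCoord, norm_snd_splitCoord]

theorem lapIterF_comp_splitCoord {V : Type*} [NormedAddCommGroup V] [NormedSpace ℝ V] (k : ℕ)
    (g : (Fin (p + 1) → ℝ) × EuclideanSpace ℝ (Fin (m - p)) → V) :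
    lapIterF m k (g ∘ splitCoord hp) =
      (laplacianOp (axialDir (Pi.basisFun ℝ (Fin (p + 1)))))^[k] g ∘ splitCoord hp := by
  have hlap : Function.Semiconj (· ∘ splitCoord hp)
      (laplacianOp (V := V) (axialDir (Pi.basisFun ℝ (Fin (p + 1))))) (lapF m) := fun g => by
    rw [← laplacianOp_comp_equiv (splitIndex hp).symm, ← splitCoord_comp_single hp]
    exact (laplacianOp_comp_continuousLinearEquiv (splitCoord hp) _ g).symm
  exact ((hlap.iterate_right k) g).symm

end CoordinateSplitting

section LeftAlternativeAlgebra

variable (A : Type*) [NormedAddCommGroup A] [NormedSpace ℝ A] [Mul A] [One A]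

/-- `A` is a real left alternative algebra with unit, whose left multiplications are continuous.
The product is only required to be a binary operation on `A`, hence the algebra axioms are listed
here. -/
structure IsLeftAltAlg : Prop where
  mul_add : ∀ a b c : A, a * (b + c) = a * b + a * c
  add_mul : ∀ a b c : A, (a + b) * c = a * c + b * c
  smul_mul : ∀ (r : ℝ) (a b : A), (r • a) * b = r • (a * b)
  mul_smul : ∀ (r : ℝ) (a b : A), a * (r • b) = r • (a * b)
  one_mul : ∀ a : A, 1 * a = a
  mul_one : ∀ a : A, a * 1 = a
  mul_mul_self_left : ∀ a b : A, a * (a * b) = a * a * b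
  continuous_mul_left : ∀ a : A, Continuous (a * ·)

variable {A}

theorem IsAltStarAlg.isLeftAltAlg {conj : A → A} (H : IsAltStarAlg A conj) : IsLeftAltAlg A where
  mul_add := H.mul_add'
  add_mul := H.add_mul'
  smul_mul := H.smul_mul'
  mul_smul := H.mul_smul'
  one_mul := H.one_mul'
  mul_one := H.mul_one'
  mul_mul_self_left := H.alt_left
  continuous_mul_left a :=
    have := H.finDim
    LinearMap.continuous_of_finiteDimensional
      (IsLinearMap.mk' (a * ·) ⟨H.mul_add' a, fun r => H.mul_smul' r a⟩)

/-- `v 0 = 1` and `v 1, …, v m` are pairwise anticommuting square roots of `-1`. -/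
structure IsCliffordFamily (v : ℕ → A) (m : ℕ) : Prop where
  zero : v 0 = 1
  mul_self : ∀ s, 1 ≤ s → s ≤ m → v s * v s = -1
  anticomm : ∀ s t, 1 ≤ s → s ≤ m → 1 ≤ t → t ≤ m → s ≠ t → v s * v t = -(v t * v s)

namespace IsLeftAltAlg

variable (hA : IsLeftAltAlg A)

/-- The left multiplication by `a`. -/
def mulLeft : A →ₗ[ℝ] A →L[ℝ] A where
  toFun a :=
    { toFun := (a * ·)
      map_add' := hA.mul_add a
      map_smul' := fun r b => hA.mul_smul r a b
      cont := hA.continuous_mul_left a }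
  map_add' a b := ContinuousLinearMap.ext (hA.add_mul a b)
  map_smul' r a := ContinuousLinearMap.ext (hA.smul_mul r a)

@[simp]
theorem mulLeft_apply (a b : A) : hA.mulLeft a b = a * b :=
  rfl

theorem mul_neg (hA : IsLeftAltAlg A) (a b : A) : a * -b = -(a * b) :=
  map_neg (hA.mulLeft a) b

theorem neg_mul (hA : IsLeftAltAlg A) (a b : A) : -a * b = -(a * b) :=
  congrArg (· b) (map_neg hA.mulLeft a)

theorem mul_mul_add_mul_mul (hA : IsLeftAltAlg A) (a b c : A) :
    a * (b * c) + b * (a * c) = (a * b + b * a) * c := by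
  have h := hA.mul_mul_self_left (a + b) c
  simp only [hA.add_mul, hA.mul_add, hA.mul_mul_self_left] at h ⊢
  linear_combination (norm := abel) h

end IsLeftAltAlg

theorem IsHypBasis.isCliffordFamily {conj : A → A} {v : ℕ → A} {m : ℕ}
    (hv : IsHypBasis A conj v m) (hA : IsLeftAltAlg A) : IsCliffordFamily v m where
  zero := hv.v_zero
  mul_self s h₁ h₂ := by
    have hconj : conj (v s) = -v s := eq_neg_of_add_eq_zero_right (hv.trace_zero s h₁ h₂)
    have hnorm := hv.norm_one s h₁ h₂
    rwa [hconj, hA.mul_neg, neg_eq_iff_eq_neg] at hnorm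
  anticomm := hv.anticomm

/-- The family `v 0, -v 1, …, -v m` of conjugates of `v`. -/
def conjFamily (v : ℕ → A) (s : ℕ) : A :=
  if s = 0 then v s else -v s

namespace IsCliffordFamily

variable {v : ℕ → A} {m : ℕ}

theorem mul_mul_add_mul_mul (hv : IsCliffordFamily v m) (hA : IsLeftAltAlg A) (s t : Fin m)
    (a : A) :
    v (s + 1) * (v (t + 1) * a) + v (t + 1) * (v (s + 1) * a) =
      -if s = t then (2 : ℝ) • a else 0 := by
  rw [hA.mul_mul_add_mul_mul]
  split_ifs with h
  · rw [h, hv.mul_self _ (by omega) (by omega), ← hA.mulLeft_apply]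
    simp [hA.one_mul, two_smul]
  · rw [hv.anticomm _ _ (by omega) (by omega) (by omega) (by omega) (by omega), neg_add_cancel,
      ← hA.mulLeft_apply]
    simp

theorem isCliffordPair_conjFamily_left (hv : IsCliffordFamily v m) (hA : IsLeftAltAlg A) :
    IsCliffordPair (fun s : Fin (m + 1) => hA.mulLeft (conjFamily v s))
      (fun s : Fin (m + 1) => hA.mulLeft (v s)) := by
  intro s t a
  cases s using Fin.cases <;> cases t using Fin.cases
  case succ.succ s t =>
    simpa [conjFamily, add_comm] using congrArg Neg.neg (hv.mul_mul_add_mul_mul hA s t a)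
  all_goals simp [conjFamily, hv.zero, hA.one_mul, two_smul, Fin.ext_iff]

theorem isCliffordPair_conjFamily_right (hv : IsCliffordFamily v m) (hA : IsLeftAltAlg A) :
    IsCliffordPair (fun s : Fin (m + 1) => hA.mulLeft (v s))
      (fun s : Fin (m + 1) => hA.mulLeft (conjFamily v s)) := by
  intro s t a
  cases s using Fin.cases <;> cases t using Fin.cases
  case succ.succ s t =>
    simpa [conjFamily, hA.mul_neg, add_comm] using
      congrArg Neg.neg (hv.mul_mul_add_mul_mul hA s t a)
  all_goals simp [conjFamily, hv.zero, hA.one_mul, two_smul, Fin.ext_iff]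

end IsCliffordFamily

end LeftAlternativeAlgebra

section PartialSlice

variable {A : Type*} [NormedAddCommGroup A] [NormedSpace ℝ A] [Mul A] [One A] {v : ℕ → A}
  {m p : ℕ} {D : Set ((Fin (p + 1) → ℝ) × ℝ)} {F₁ F₂ : (Fin (p + 1) → ℝ) × ℝ → A}

/-- The left multiplications by the units `v (p + 1), …, v m`. -/
def IsLeftAltAlg.mulLeftInr (hA : IsLeftAltAlg A) (v : ℕ → A) (hp : p ≤ m) (t : Fin (m - p)) :
    A →L[ℝ] A :=
  hA.mulLeft (v (splitIndex hp (.inr t)))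

theorem IsLeftAltAlg.sumElim_mulLeft (hA : IsLeftAltAlg A) (v : ℕ → A) (hp : p ≤ m) :
    Sum.elim (fun i : Fin (p + 1) => hA.mulLeft (v i)) (hA.mulLeftInr v hp) =
      (fun s : Fin (m + 1) => hA.mulLeft (v s)) ∘ splitIndex hp := by
  ext (i | t) <;> simp [mulLeftInr]

theorem IsLeftAltAlg.dop_comp_splitCoord (hA : IsLeftAltAlg A) (hp : p ≤ m)
    (g : (Fin (p + 1) → ℝ) × EuclideanSpace ℝ (Fin (m - p)) → A) :
    Dop v m 0 m (g ∘ splitCoord hp) =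
      diracOp (Sum.elim (fun i : Fin (p + 1) => hA.mulLeft (v i)) (hA.mulLeftInr v hp))
        (axialDir (Pi.basisFun ℝ (Fin (p + 1)))) g ∘ splitCoord hp := by
  have hdop : Dop v m 0 m = diracOp (fun s : Fin (m + 1) => hA.mulLeft (v s)) (Pi.single · 1) := by
    ext f x
    simp [Dop, diracOp, pdF, Fin.is_le]
  rw [hdop, diracOp_comp_continuousLinearEquiv, splitCoord_comp_single, hA.sumElim_mulLeft,
    ← diracOp_comp_equiv (splitIndex hp).symm]
  simp [Function.comp_assoc]

theorem IsCliffordFamily.isAxialCliffordPair (hv : IsCliffordFamily v m) (hA : IsLeftAltAlg A)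
    (hp : p ≤ m) :
    IsAxialCliffordPair (fun i : Fin (p + 1) => hA.mulLeft (conjFamily v i))
      (fun i => hA.mulLeft (v i)) (hA.mulLeftInr v hp) := by
  have hconj : Sum.elim (fun i : Fin (p + 1) => hA.mulLeft (conjFamily v i))
      (-hA.mulLeftInr v hp) =
      (fun s : Fin (m + 1) => hA.mulLeft (conjFamily v s)) ∘ splitIndex hp := by
    have hne (t : Fin (m - p)) : (splitIndex hp (.inr t) : ℕ) ≠ 0 := fun h =>
      not_splitIndex_inr_le hp t (h.trans_le p.zero_le)
    ext (i | t) a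
    · simp
    · simp only [Function.comp_apply, conjFamily, hne t]
      simp [IsLeftAltAlg.mulLeftInr]
  have hσ := (splitIndex hp).injective
  constructor
  · rw [hconj, hA.sumElim_mulLeft]
    exact (hv.isCliffordPair_conjFamily_left hA).comp_injective hσ
  · rw [hconj, hA.sumElim_mulLeft]
    exact (hv.isCliffordPair_conjFamily_right hA).comp_injective hσ

theorem IsLeftAltAlg.one_ne_zero [Nontrivial A] (hA : IsLeftAltAlg A) : (1 : A) ≠ 0 := by
  intro h
  obtain ⟨a, ha⟩ := exists_ne (0 : A)
  exact ha (by rw [← hA.one_mul a, h, ← hA.mulLeft_apply, map_zero, zero_apply])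

theorem IsLeftAltAlg.emb_mul (hA : IsLeftAltAlg A) (hp : p ≤ m) {w : Fin (m + 1) → ℝ}
    (hw : (splitCoord hp w).1 = 0) (a : A) :
    emb v m w * a = radialMul (hA.mulLeftInr v hp) (splitCoord hp w).2 a := by
  have hw' (i : Fin (p + 1)) : w (splitIndex hp (.inl i)) = 0 := congrFun hw i
  rw [← hA.mulLeft_apply, emb, map_sum, ← (splitIndex hp).sum_comp, Fintype.sum_sum_type]
  simp [hw', radialMul_apply, IsLeftAltAlg.mulLeftInr, sum_apply]

theorem IsCliffordFamily.mem_Sph_iff [Nontrivial A] (hv : IsCliffordFamily v m)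
    (hA : IsLeftAltAlg A) (hp : p ≤ m) {w : Fin (m + 1) → ℝ} :
    w ∈ Sph v m p ↔ (splitCoord hp w).1 = 0 ∧ ‖(splitCoord hp w).2‖ = 1 := by
  have hfst : (∀ s : Fin (m + 1), (s : ℕ) ≤ p → w s = 0) ↔ (splitCoord hp w).1 = 0 := by
    simp [← (splitIndex hp).forall_congr_right, funext_iff, Fin.is_le]
  rw [Sph, Set.mem_ofPred_eq, hfst]
  refine and_congr_right fun hw => ?_
  have hsq : emb v m w * emb v m w = -(‖(splitCoord hp w).2‖ ^ 2 • (1 : A)) := by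
    rw [← (hv.isAxialCliffordPair hA hp).radialMul_radialMul, ← hA.emb_mul hp hw,
      ← hA.emb_mul hp hw, hA.mul_one]
  rw [hsq, neg_inj, ← pow_eq_one_iff_of_nonneg (norm_nonneg _) two_ne_zero,
    ← (smul_left_injective ℝ hA.one_ne_zero).eq_iff, one_smul]

theorem IsCliffordFamily.splitCoord_mem_axialDomain [Nontrivial A] (hv : IsCliffordFamily v m)
    (hA : IsLeftAltAlg A) (hp : p ≤ m) (hD : ∀ z ∈ D, reflD p z ∈ D) {x : Fin (m + 1) → ℝ}
    (hx : x ∈ OmegaD v m p D) : splitCoord hp x ∈ axialDomain D := by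
  obtain ⟨w, hw, z, hz, rfl⟩ := hx
  obtain ⟨hw₁, hw₂⟩ := (hv.mem_Sph_iff hA hp).1 hw
  have hz' : (z.1, |z.2|) ∈ D := by
    obtain h | h := abs_choice z.2 <;> rw [h]
    exacts [hz, hD z hz]
  simpa [axialDomain, splitCoord_pt, hw₁, hw₂, norm_smul] using hz'

theorem IsStemSystem.of_stemCR (hA : IsLeftAltAlg A) (hv : v 0 = 1) (hstem : IsStem p D F₁ F₂)
    (hF₁ : ContDiffOn ℝ 1 F₁ D) (hF₂ : ContDiffOn ℝ 1 F₂ D) (hCR : StemCR v p D F₁ F₂) :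
    IsStemSystem (fun i : Fin (p + 1) => hA.mulLeft (conjFamily v i)) (fun i => hA.mulLeft (v i))
      (Pi.basisFun ℝ (Fin (p + 1))) D F₁ F₂ where
  contDiffOn_fst := hF₁
  contDiffOn_snd := hF₂
  even z hz := (hstem z hz).1
  odd z hz := (hstem z hz).2
  sum_fst z hz := by simpa [diracOp, DopSx, pdSx, pdSr, sub_eq_zero] using (hCR z hz).1
  sum_snd z hz := by
    refine Eq.trans ?_ (eq_neg_of_add_eq_zero_left (hCR z hz).2)
    simp [diracOp, DbaropSx, pdSx, Fin.sum_univ_succ, conjFamily, hv, hA.one_mul, hA.neg_mul,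
      sub_eq_add_neg]

theorem exists_norm_eq_one_and_norm_smul_eq {E : Type*} [NormedAddCommGroup E] [NormedSpace ℝ E]
    [Nontrivial E] (x : E) : ∃ n : E, ‖n‖ = 1 ∧ ‖x‖ • n = x := by
  obtain rfl | hx := eq_or_ne x 0
  · obtain ⟨n, hn⟩ := exists_norm_eq E zero_le_one
    exact ⟨n, hn, by simp⟩
  · exact ⟨NormedSpace.normalize x, NormedSpace.norm_normalize_eq_one_iff.2 hx,
      NormedSpace.norm_smul_normalize x⟩

theorem Induced.eqOn_axialFunction [Nontrivial A] (hp : p < m)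
    {g : (Fin (p + 1) → ℝ) × EuclideanSpace ℝ (Fin (m - p)) → A}
    (hg : Induced v m p D F₁ F₂ (g ∘ splitCoord hp.le)) (hv : IsCliffordFamily v m)
    (hA : IsLeftAltAlg A) {H : (Fin (p + 1) → ℝ) × ℝ → A} (hH : ∀ z ∈ D, z.2 • H z = F₂ z) :
    Set.EqOn g (axialFunction (hA.mulLeftInr v hp.le) F₁ H) (axialDomain D) := by
  rintro ⟨y, u⟩ hu
  have : NeZero (m - p) := ⟨Nat.sub_ne_zero_of_lt hp⟩
  obtain ⟨n, hn, hu'⟩ := exists_norm_eq_one_and_norm_smul_eq u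
  let w := (splitCoord hp.le).symm (0, n)
  have hpt : splitCoord hp.le (pt m p w y ‖u‖) = (y, u) := by simp [w, splitCoord_pt, hu']
  have hw : w ∈ Sph v m p := by simp [w, hv.mem_Sph_iff hA hp.le, hn]
  rw [← hpt, ← Function.comp_apply (f := g), hg w hw (y, ‖u‖) hu, hA.emb_mul hp.le (by simp [w]),
    ← hH _ hu, hpt, map_smul, ← smul_apply, ← map_smul]
  simp [axialFunction, axialLift, w, hu']

theorem IsLeftAltAlg.emb_normq_mul_rad_smul (hA : IsLeftAltAlg A) (v : ℕ → A) (hp : p ≤ m)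
    (x : Fin (m + 1) → ℝ) (a : A) :
    emb v m (normq m p x) * (rad m p x • a) =
      radialMul (hA.mulLeftInr v hp) (splitCoord hp x).2 a := by
  rw [hA.emb_mul hp (by simp [normq, splitCoord_xqpart]), ← norm_snd_splitCoord hp]
  obtain h | h := eq_or_ne (splitCoord hp x).2 0
  · simp [h]
  · simp [normq, splitCoord_xqpart, ← norm_snd_splitCoord hp, smul_smul, h]

theorem cq_eq_prod (m p k : ℕ) :
    cq (m - p) k = ∏ i ∈ Finset.range k, ((Fintype.card (Fin (m - p)) : ℝ) - (1 + 2 * i)) := by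
  simp only [cq, Fintype.card_fin, add_comm]

theorem iterated_laplacian_gsr_general [CompleteSpace A] (hA : IsLeftAltAlg A)
    (hv : IsCliffordFamily v m) (hp : p < m) (hD : IsOpen D) (hDrefl : ∀ z ∈ D, reflD p z ∈ D)
    (hstem : IsStem p D F₁ F₂) (hF₁ : ContDiffOn ℝ 1 F₁ D) (hF₂ : ContDiffOn ℝ 1 F₂ D)
    {f : (Fin (m + 1) → ℝ) → A} (hind : Induced v m p D F₁ F₂ f) (hCR : StemCR v p D F₁ F₂)
    (k : ℕ) :
    (∀ x ∈ OmegaD v m p D,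
      lapIterF m k f x =
        cq (m - p) k •
          (((T1 p)^[k] F₁) (projP m p x, rad m p x) +
            emb v m (normq m p x) * ((T2 p)^[k] F₂) (projP m p x, rad m p x))) ∧
    (∀ x ∈ OmegaD v m p D, rad m p x ≠ 0 →
      Dop v m 0 m (lapIterF m k f) x =
        -(cq (m - p) (k + 1) / rad m p x) •
          ((T2 p)^[k] F₂) (projP m p x, rad m p x)) := by
  cases subsingleton_or_nontrivial A
  · exact ⟨fun _ _ => Subsingleton.elim _ _, fun _ _ _ => Subsingleton.elim _ _⟩
  have hC := hv.isAxialCliffordPair hA hp.le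
  have hS := IsStemSystem.of_stemCR hA hv.zero hstem hF₁ hF₂ hCR
  have hV := hS.isVekuaSystem _ (hC.left.comp_injective Sum.inl_injective)
    (hC.right.comp_injective Sum.inl_injective) hD
  obtain ⟨g, rfl⟩ := (splitCoord hp.le).injective.surjective_comp_right f
  have hg := hind.eqOn_axialFunction hp hv hA fun z => hS.snd_smul_hadamardQuotient
  have hT {x} (hx : splitCoord hp.le x ∈ axialDomain D) :
      (T2 p)^[k] F₂ (projP m p x, rad m p x) =
        rad m p x • axialLift (radialDeriv^[k] (hadamardQuotient F₂)) (splitCoord hp.le x) := by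
    rw [splitCoord_mem_axialDomain_iff] at hx
    rw [axialLift_splitCoord]
    exact hV.snd.eqOn_iterate_T2 hD (fun z hz => (hS.snd_smul_hadamardQuotient hz).symm) k hx
  rw [lapIterF_comp_splitCoord]
  refine ⟨fun x hx => ?_, fun x hx hr => ?_⟩ <;>
    replace hx := hv.splitCoord_mem_axialDomain hA hp.le hDrefl hx
  · rw [Function.comp_apply, hV.eqOn_iterate_laplacianOp hC hD hg k hx, cq_eq_prod m p, hT hx,
      hA.emb_normq_mul_rad_smul v hp.le, T1_eq_radialDeriv, Pi.smul_apply, axialFunction,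
      axialLift_splitCoord]
  · rw [hA.dop_comp_splitCoord, Function.comp_apply,
      hV.diracOp_iterate_laplacianOp hC hD hg k hx, cq_eq_prod m p, hT hx, smul_smul, neg_mul,
      div_mul_cancel₀ _ hr]

end PartialSlice

/-- For `f = F₁ + ωF₂ ∈ GSR(Ω_D)` and `k ∈ ℕ`:
`Δ_x^k f = C_q(k)(A_k + ω B_k)` on `Ω_D`, and
`D_x Δ_x^k f = -C_q(k+1) B_k / r` (for `r ≠ 0`), where
`A_k = ((1/r)∂_r)^k F₁`, `B_k = (∂_r ∘ (1/r))^k F₂` and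
`C_q(k) = (q-1)(q-3)⋯(q-2k+1)`, `C_q(0) = 1`. -/
theorem iterated_laplacian_gsr
    {A : Type*} [NormedAddCommGroup A] [NormedSpace ℝ A] [Mul A] [One A]
    (conj : A → A) (H : IsAltStarAlg A conj)
    (v : ℕ → A) (m p : ℕ) (hv : IsHypBasis A conj v m) (hp : p < m)
    (D : Set ((Fin (p + 1) → ℝ) × ℝ)) (hD : IsOpen D)
    (hDrefl : ∀ z ∈ D, reflD p z ∈ D)
    (F₁ F₂ : (Fin (p + 1) → ℝ) × ℝ → A) (hstem : IsStem p D F₁ F₂)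
    (hF₁ : ContDiffOn ℝ 1 F₁ D) (hF₂ : ContDiffOn ℝ 1 F₂ D)
    (f : (Fin (m + 1) → ℝ) → A) (hind : Induced v m p D F₁ F₂ f)
    (hCR : StemCR v p D F₁ F₂) (k : ℕ) :
    (∀ x ∈ OmegaD v m p D,
      lapIterF m k f x =
        cq (m - p) k •
          (((T1 p)^[k] F₁) (projP m p x, rad m p x) +
            emb v m (normq m p x) * ((T2 p)^[k] F₂) (projP m p x, rad m p x))) ∧
    (∀ x ∈ OmegaD v m p D, rad m p x ≠ 0 →
      Dop v m 0 m (lapIterF m k f) x =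
        -(cq (m - p) (k + 1) / rad m p x) •
          ((T2 p)^[k] F₂) (projP m p x, rad m p x)) := by
  have := H.finDim
  have := FiniteDimensional.complete ℝ A
  exact iterated_laplacian_gsr_general H.isLeftAltAlg (hv.isCliffordFamily H.isLeftAltAlg) hp hD
    hDrefl hstem hF₁ hF₂ hind hCR k

end GPSM
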